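/- arXiv:2005.04450 — 2 statements merged into one kernel-verified Lean document; each statement's English description precedes it below -/
import Mathlib

section
/- Let $0<p\le 1<q<\infty$ and $-1<\beta\le\alpha<\infty$, and set $t=(\beta+2)/(\alpha+2)$ and $1/q+1/q'=1$. Then the Toeplitz operator $T_{\mu,\beta}:L^p_a(\omega_\alpha)\to L^q_a(\omega_\beta)$ is bounded if and only if $\mu$ is a $(1/p+t/q')$-Carleson measure for $L^1_a(\omega_\alpha)$, i.e. $\sup_{z\in\mathbb{D}}\mu(D(z,r))/(1-|z|^2)^{(\alpha+2)(1/p+t/q')}<\infty$ for some $r\in(0,1)$. -/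
/-!
Write `δ(z) = 1 - |z|²` and `σ = (a+2)/p + (b+2)/q'`, so that the Carleson condition reads
`μ(D(z,r)) ≤ C δ(z)^σ`.

*Sufficiency.* Hölder's inequality with respect to the measure `|f| δ^(-(b+2)/q') dμ`, Tonelli's
theorem and the Forelli–Rudin estimate `∫ |1 - z̄ w|^(-s) ω_a(w) dA(w) ≤ C δ(z)^(a+2-s)`, `s > a+2`,
give `‖T_{μ,b} f‖ ≤ K ∫ |f| δ^(-(b+2)/q') dμ` (`toep_norm_le`). For a polynomial `f` the integral on
the right is at most a constant times the `L^p(ω_a)` norm of `f` (`carleson_embedding`):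
subharmonicity of `|f|^p` on a disk `B(w)` around `w` of radius comparable to `δ(w)` bounds
`|f(w)| δ(w)^((a+2)/p)` by the `1/p`-th power of `J(w) = ∫_{B(w)} |f|^p ω_a`. As `p ≤ 1`, we have
`J^(1/p) ≤ ‖f‖^(1-p) J`, and integrating `J` against `μ` exchanges, by Tonelli, into the measures
`μ(D(u,r))`.

*Necessity.* Differentiating under the integral, the `k`-th derivative of `T_{μ,b} f` is a constant
`≥ 1` times `∫ f(w) w̄ᵏ (1 - z w̄)^(-m) dμ(w)` with `m = 2 + b + k`. Cauchy's estimate and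
subharmonicity bound it at `z` by `C δ(z)^(-k-(b+2)/q)` times the `L^q(ω_b)` norm of `T_{μ,b} f`
(`enorm_toepAux_le`). Inserting `f(w) = wᵏ (1 - z̄ w)^(-m)` makes the integrand nonnegative and at
least `c δ(z)^(-2m)` on `D(z,1/4)` when `|z| ≥ 1/2`, while the norm of this `f` is at most
`C δ(z)^((a+2)/p - m)` by Forelli–Rudin once `p m > a + 2`, which is why `k` derivatives are taken.
Since boundedness is only assumed on polynomials, the test function is approximated by them
uniformly on the disk (`toepAux_le_of_polynomial`).
-/

open MeasureTheory Metric Filter Complex Set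
open scoped ENNReal NNReal Topology

/-- The normalized area measure on `ℂ`. -/
noncomputable def dA : Measure ℂ := (ENNReal.ofReal Real.pi)⁻¹ • volume

/-- The standard weight `ω_a(z) = (1+a)(1-|z|²)^a`. -/
noncomputable def stdW (a : ℝ) (z : ℂ) : ℝ := (1 + a) * (1 - ‖z‖ ^ 2) ^ a

/-- The weighted `L^p` (quasi-)norm over the unit disk. -/
noncomputable def wnorm (p a : ℝ) (f : ℂ → ℂ) : ℝ≥0∞ :=
  (∫⁻ z in ball (0 : ℂ) 1, ENNReal.ofReal (‖f z‖ ^ p * stdW a z) ∂dA) ^ (1 / p)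

/-- The pseudohyperbolic disk `D(z,r)`. -/
def pD (z : ℂ) (r : ℝ) : Set ℂ :=
  {w | w ∈ ball (0 : ℂ) 1 ∧ ‖(z - w) / (1 - (starRingEnd ℂ) z * w)‖ < r}

/-- The Toeplitz operator `T_{μ,b}`. -/
noncomputable def Toep (μ : Measure ℂ) (b : ℝ) (f : ℂ → ℂ) (z : ℂ) : ℂ :=
  ∫ w in ball (0 : ℂ) 1, f w / (1 - z * (starRingEnd ℂ) w) ^ (((2 + b : ℝ)) : ℂ) ∂μ

/-- The Bloch norm. -/
noncomputable def blochNorm (g : ℂ → ℂ) : ℝ :=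
  ‖g 0‖ + sSup ((fun z => (1 - ‖z‖ ^ 2) * ‖deriv g z‖) '' ball (0 : ℂ) 1)

/-- Membership in the Bloch space. -/
def MemBloch (g : ℂ → ℂ) : Prop :=
  DifferentiableOn ℂ g (ball (0 : ℂ) 1) ∧
    BddAbove ((fun z => (1 - ‖z‖ ^ 2) * ‖deriv g z‖) '' ball (0 : ℂ) 1)

/-! ### Sub-mean value estimates -/

/-- Mean value inequality on circles. The range of angles is the one used by the polar
coordinates of Mathlib. -/
lemma circle_mean_le {f : ℂ → ℂ} {w : ℂ} {R r : ℝ} (hf : DifferentiableOn ℂ f (ball w R))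
    (hr0 : 0 < r) (hrR : r < R) :
    ‖f w‖ₑ * ENNReal.ofReal (2 * Real.pi) ≤
      ∫⁻ θ in Ioo (-Real.pi) Real.pi, ‖f (circleMap w r θ)‖ₑ := by
  have hd : DiffContOnCl ℂ f (ball w |r|) := by
    rw [abs_of_pos hr0]
    exact (hf.mono (closedBall_subset_ball hrR)).diffContOnCl_ball subset_rfl
  have h1 := hd.circleAverage
  rw [Real.circleAverage_def] at h1
  have hper : Function.Periodic (fun θ => f (circleMap w r θ)) (2 * Real.pi) := fun θ => by
    simp [periodic_circleMap w r θ]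
  have h2 := hper.intervalIntegral_add_eq 0 (-Real.pi)
  have e1 : (0 : ℝ) + 2 * Real.pi = 2 * Real.pi := by ring
  have e2 : -Real.pi + 2 * Real.pi = Real.pi := by ring
  rw [e1, e2] at h2
  have hpi := Real.pi_pos
  rw [h2, intervalIntegral.integral_of_le (by linarith), integral_Ioc_eq_integral_Ioo] at h1
  have h3 : ‖f w‖ₑ = ENNReal.ofReal (2 * Real.pi)⁻¹ *
      ‖∫ θ in Ioo (-Real.pi) Real.pi, f (circleMap w r θ)‖ₑ := by
    rw [← h1, enorm_smul, Real.enorm_of_nonneg (by positivity)]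
  rw [h3, mul_comm, ← mul_assoc, ← ENNReal.ofReal_mul (by positivity),
    mul_inv_cancel₀ (by positivity), ENNReal.ofReal_one, one_mul]
  exact enorm_integral_le_lintegral_enorm _

lemma area_mean_le {f : ℂ → ℂ} {w : ℂ} {R : ℝ} (hf : DifferentiableOn ℂ f (ball w R))
    (hR : 0 < R) :
    ‖f w‖ₑ * ENNReal.ofReal (Real.pi * R ^ 2) ≤ ∫⁻ u in ball w R, ‖f u‖ₑ := by
  classical
  set g : ℂ → ℝ≥0∞ := fun u => ‖(ball w R).piecewise f 0 u‖ₑ with hg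
  have hgm : Measurable g :=
    (hf.continuousOn.measurable_piecewise continuousOn_const measurableSet_ball).enorm
  have e1 : ∫⁻ u in ball w R, ‖f u‖ₑ = ∫⁻ u, g (w + u) := by
    rw [lintegral_add_left_eq_self g w, ← lintegral_indicator measurableSet_ball]
    congr 1; ext u
    by_cases hu : u ∈ ball w R <;> simp [g, hu]
  rw [e1, ← Complex.lintegral_comp_polarCoord_symm, polarCoord_target,
    Measure.volume_eq_prod, ← Measure.prod_restrict]
  have hm : Measurable fun p : ℝ × ℝ =>
      ENNReal.ofReal p.1 • g (w + Complex.polarCoord.symm p) := by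
    have : Measurable fun p : ℝ × ℝ => (Complex.polarCoord.symm p : ℂ) := by
      simp only [Complex.polarCoord_symm_apply]
      fun_prop
    simp only [smul_eq_mul]
    exact (by fun_prop : Measurable fun p : ℝ × ℝ => ENNReal.ofReal p.1).mul
      (hgm.comp (measurable_const.add this))
  rw [lintegral_prod _ hm.aemeasurable]
  have hint : ∫⁻ r in Ioo 0 R, ENNReal.ofReal r = ENNReal.ofReal (R ^ 2 / 2) := by
    rw [← ofReal_integral_eq_lintegral_ofReal, ← integral_Ioc_eq_integral_Ioo,
      ← intervalIntegral.integral_of_le hR.le, integral_id]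
    · congr 1; ring
    · have : IntegrableOn (fun r : ℝ => r) (Icc 0 R) := continuous_id.integrableOn_Icc
      exact this.mono_set Ioo_subset_Icc_self
    · filter_upwards [ae_restrict_mem measurableSet_Ioo] with r hr using hr.1.le
  calc ‖f w‖ₑ * ENNReal.ofReal (Real.pi * R ^ 2)
      = ∫⁻ r in Ioo 0 R, ENNReal.ofReal r * (‖f w‖ₑ * ENNReal.ofReal (2 * Real.pi)) := by
        rw [lintegral_mul_const _ (by fun_prop), hint, mul_left_comm,
          ← ENNReal.ofReal_mul (by positivity)]
        congr 2; ring
    _ ≤ ∫⁻ r in Ioo 0 R, ∫⁻ θ in Ioo (-Real.pi) Real.pi,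
          ENNReal.ofReal r • g (w + Complex.polarCoord.symm (r, θ)) := by
        refine setLIntegral_mono' measurableSet_Ioo fun r hr => ?_
        have hmem : ∀ θ : ℝ, w + Complex.polarCoord.symm (r, θ) = circleMap w r θ := fun θ => by
          rw [Complex.polarCoord_symm_apply, circleMap, Complex.exp_mul_I]; simp
        have hin : ∀ θ : ℝ, circleMap w r θ ∈ ball w R := fun θ => by
          simp [circleMap, abs_of_pos hr.1, hr.2]
        simp only [smul_eq_mul]
        rw [lintegral_const_mul' _ _ ENNReal.ofReal_ne_top]
        gcongr
        refine (circle_mean_le hf hr.1 hr.2).trans (le_of_eq ?_)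
        congr 1; ext θ
        rw [hmem]; simp only [g]; rw [Set.piecewise_eq_of_mem _ _ _ (hin θ)]
    _ ≤ _ := lintegral_mono_set fun r hr => hr.1

/-- Hölder's inequality upgrades the area mean value inequality to exponents `p ≥ 1`. -/
lemma submean_ge_one {p : ℝ} (hp : 1 ≤ p) {f : ℂ → ℂ} {w : ℂ} {R : ℝ}
    (hf : DifferentiableOn ℂ f (ball w R)) (hR : 0 < R) :
    ‖f w‖ₑ ^ p * ENNReal.ofReal (Real.pi * R ^ 2) ≤ ∫⁻ u in ball w R, ‖f u‖ₑ ^ p := by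
  have h1 := area_mean_le hf hR
  set A := ENNReal.ofReal (Real.pi * R ^ 2) with hA
  have hpi := Real.pi_pos
  have hA0 : A ≠ 0 := by simp [hA]; positivity
  have hAt : A ≠ ⊤ := ENNReal.ofReal_ne_top
  have hp0 : 0 < p := by linarith
  have hvol : volume (ball w R) = A := by
    rw [Complex.volume_ball, hA, mul_comm Real.pi, ENNReal.ofReal_mul (by positivity),
      ENNReal.ofReal_pow hR.le]
    congr 1
    rw [← NNReal.coe_real_pi, ENNReal.ofReal_coe_nnreal]
  have hae : AEStronglyMeasurable f (volume.restrict (ball w R)) :=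
    hf.continuousOn.aestronglyMeasurable measurableSet_ball
  have h2 := eLpNorm_le_eLpNorm_mul_rpow_measure_univ (μ := volume.restrict (ball w R))
    (p := 1) (q := ENNReal.ofReal p) (f := f) (by simpa using hp) hae
  rw [eLpNorm_one_eq_lintegral_enorm, eLpNorm_eq_lintegral_rpow_enorm_toReal (by simpa using hp0)
    (by simp), Measure.restrict_apply_univ, hvol] at h2
  simp only [ENNReal.toReal_ofReal hp0.le, ENNReal.toReal_one] at h2
  have h3 := ENNReal.rpow_le_rpow (h1.trans h2) hp0.le
  rw [ENNReal.mul_rpow_of_nonneg _ _ hp0.le, ENNReal.mul_rpow_of_nonneg _ _ hp0.le,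
    ← ENNReal.rpow_mul, ← ENNReal.rpow_mul, one_div_mul_cancel hp0.ne', ENNReal.rpow_one] at h3
  have e3 : (1 / 1 - 1 / p) * p = p - 1 := by field_simp
  rw [e3] at h3
  have e4 : A ^ p = A * A ^ (p - 1) := by
    conv_lhs => rw [show p = 1 + (p - 1) by ring, ENNReal.rpow_add _ _ hA0 hAt, ENNReal.rpow_one]
  have hA0' : A ^ (p - 1) ≠ 0 := by simp [ENNReal.rpow_eq_zero_iff, hA0, hAt]
  have hAt' : A ^ (p - 1) ≠ ⊤ := by simp [ENNReal.rpow_eq_top_iff, hA0, hAt]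
  rw [e4, ← mul_assoc] at h3
  exact (ENNReal.mul_le_mul_iff_left hA0' hAt').1 h3

/-- The sub-mean value property for `p ≤ 1`. Let `M` be the supremum of
`‖f u‖ (R - |u - w|) ^ (2/p)` over the disk. The case of exponent one on disks of half the distance
to the boundary, where `‖f‖ = ‖f‖ ^ p ‖f‖ ^ (1 - p)` and the last factor is controlled by `M`, shows
that `M` is at most a constant times `M ^ (1 - p) ∫ ‖f‖ ^ p`. -/
lemma submean_le_one {p : ℝ} (hp0 : 0 < p) (hp : p ≤ 1) {f : ℂ → ℂ} {w : ℂ} {R B : ℝ}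
    (hf : DifferentiableOn ℂ f (ball w R)) (hR : 0 < R) (hB : ∀ u ∈ ball w R, ‖f u‖ ≤ B) :
    ‖f w‖ₑ ^ p * ENNReal.ofReal (R ^ 2) ≤
      ENNReal.ofReal (2 ^ (2 / p) / Real.pi) * ∫⁻ u in ball w R, ‖f u‖ₑ ^ p := by
  have hpi := Real.pi_pos
  set K : ℝ := 2 ^ (2 / p) / Real.pi with hK
  have hK0 : 0 < K := by positivity
  set I := ∫⁻ u in ball w R, ‖f u‖ₑ ^ p with hI
  rcases eq_or_ne I ⊤ with hIt | hIt
  · rw [hIt, ENNReal.mul_top (by simpa using hK0)]; exact le_top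
  set φ : ℂ → ℝ := fun u => ‖f u‖ * (R - dist u w) ^ (2 / p) with hφ
  have hbd : BddAbove (φ '' ball w R) := by
    refine ⟨B * R ^ (2 / p), ?_⟩
    rintro _ ⟨u, hu, rfl⟩
    have h1 : 0 ≤ dist u w := dist_nonneg
    have h2 : dist u w < R := hu
    have := hB u hu
    have h3 : 0 ≤ B := (norm_nonneg _).trans this
    simp only [φ]
    gcongr
    linarith
  set M := sSup (φ '' ball w R) with hM
  have hφM : ∀ u ∈ ball w R, φ u ≤ M := fun u hu => le_csSup hbd ⟨u, hu, rfl⟩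
  have hw : w ∈ ball w R := mem_ball_self hR
  have hφ0 : ∀ u ∈ ball w R, 0 ≤ φ u := fun u hu => by
    have h2 : dist u w < R := hu
    exact mul_nonneg (norm_nonneg _) (Real.rpow_nonneg (by linarith) _)
  have hM0 : 0 ≤ M := (hφ0 w hw).trans (hφM w hw)
  have key : ∀ u ∈ ball w R, φ u ≤ K * M ^ (1 - p) * I.toReal := by
    intro u hu
    have hu' : dist u w < R := hu
    obtain ⟨d, hd⟩ : ∃ d, d = (R - dist u w) / 2 := ⟨_, rfl⟩
    have hd0 : 0 < d := by linarith
    have hsub : ball u d ⊆ ball w R := ball_subset_ball' (by linarith)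
    set L : ℝ := (M * d ^ (-(2 / p))) ^ (1 - p) with hL
    have hL0 : 0 ≤ L := by positivity
    have hpt : ∀ v ∈ ball u d, ‖f v‖ₑ ≤ ‖f v‖ₑ ^ p * ENNReal.ofReal L := by
      intro v hv
      have hv' : dist v u < d := hv
      have htri := dist_triangle v u w
      have h1 : ‖f v‖ * d ^ (2 / p) ≤ M := by
        refine le_trans ?_ (hφM v (hsub hv))
        simp only [φ]
        gcongr
        linarith
      have h2 : ‖f v‖ ≤ M * d ^ (-(2 / p)) := by
        rw [Real.rpow_neg hd0.le, ← div_eq_mul_inv, le_div_iff₀ (by positivity)]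
        exact h1
      have h3 : ‖f v‖ ≤ ‖f v‖ ^ p * L := by
        calc ‖f v‖ = ‖f v‖ ^ p * ‖f v‖ ^ (1 - p) := by
              rw [← Real.rpow_add_of_nonneg (norm_nonneg _) hp0.le (by linarith)]; simp
          _ ≤ _ := by
              gcongr
              exact Real.rpow_le_rpow (norm_nonneg _) h2 (by linarith)
      rw [← ofReal_norm, ENNReal.ofReal_rpow_of_nonneg (norm_nonneg _) hp0.le,
        ← ENNReal.ofReal_mul (by positivity)]
      exact ENNReal.ofReal_le_ofReal h3
    have h4 : ‖f u‖ₑ * ENNReal.ofReal (Real.pi * d ^ 2) ≤ I * ENNReal.ofReal L := by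
      refine (area_mean_le (hf.mono hsub) hd0).trans ?_
      refine (setLIntegral_mono' measurableSet_ball hpt).trans ?_
      rw [lintegral_mul_const' _ _ ENNReal.ofReal_ne_top]
      gcongr
      exact lintegral_mono_set hsub
    rw [← ofReal_norm, ← ENNReal.ofReal_mul (norm_nonneg _),
      ← ENNReal.ofReal_toReal hIt, ← ENNReal.ofReal_mul ENNReal.toReal_nonneg,
      ENNReal.ofReal_le_ofReal_iff (by positivity)] at h4
    have e1 : φ u = ‖f u‖ * (Real.pi * d ^ 2) * (2 ^ (2 / p) / Real.pi * d ^ (2 / p - 2)) := by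
      have : R - dist u w = 2 * d := by linarith
      simp only [φ]
      rw [this, Real.mul_rpow (by norm_num) hd0.le, Real.rpow_sub hd0]
      have : d ^ (2 : ℝ) = d ^ 2 := by norm_cast
      rw [this]
      field_simp
    have e2 : L = M ^ (1 - p) * d ^ (2 - 2 / p) := by
      rw [hL, Real.mul_rpow hM0 (by positivity), ← Real.rpow_mul hd0.le]
      congr 2; field_simp; ring
    rw [e1]
    refine (mul_le_mul_of_nonneg_right h4 (by positivity)).trans (le_of_eq ?_)
    have e3 : d ^ (2 - 2 / p) * d ^ (2 / p - 2) = 1 := by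
      rw [← Real.rpow_add hd0]; simp
    rw [e2]
    calc _ = K * M ^ (1 - p) * I.toReal * (d ^ (2 - 2 / p) * d ^ (2 / p - 2)) := by
          rw [hK]; ring
      _ = _ := by rw [e3, mul_one]
  have hMle : M ≤ K * M ^ (1 - p) * I.toReal := by
    refine csSup_le ⟨_, w, hw, rfl⟩ ?_
    rintro _ ⟨u, hu, rfl⟩
    exact key u hu
  have hMp : M ^ p ≤ K * I.toReal := by
    rcases hM0.eq_or_lt with h | h
    · rw [← h, Real.zero_rpow hp0.ne']; positivity
    · have h5 : M = M ^ p * M ^ (1 - p) := by rw [← Real.rpow_add h]; simp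
      have h6 : 0 < M ^ (1 - p) := by positivity
      refine le_of_mul_le_mul_right ?_ h6
      rw [← h5]; linarith
  have h7 : ‖f w‖ ^ p * R ^ 2 ≤ K * I.toReal := by
    refine le_trans (le_of_eq ?_) ((Real.rpow_le_rpow (hφ0 w hw) (hφM w hw) hp0.le).trans hMp)
    simp only [φ, dist_self, sub_zero]
    rw [Real.mul_rpow (norm_nonneg _) (by positivity), ← Real.rpow_mul hR.le,
      div_mul_cancel₀ _ hp0.ne']
    norm_cast
  rw [← ofReal_norm, ENNReal.ofReal_rpow_of_nonneg (norm_nonneg _) hp0.le,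
    ← ENNReal.ofReal_mul (by positivity)]
  conv_rhs => rw [← ENNReal.ofReal_toReal hIt, ← ENNReal.ofReal_mul hK0.le]
  exact ENNReal.ofReal_le_ofReal h7

lemma submean {p : ℝ} (hp0 : 0 < p) : ∃ C : ℝ, 0 < C ∧ ∀ (f : ℂ → ℂ) (w : ℂ) (R : ℝ),
    DifferentiableOn ℂ f (ball w R) → 0 < R → (∃ B, ∀ u ∈ ball w R, ‖f u‖ ≤ B) →
    ‖f w‖ₑ ^ p * ENNReal.ofReal (R ^ 2) ≤
      ENNReal.ofReal C * ∫⁻ u in ball w R, ‖f u‖ₑ ^ p := by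
  have hpi := Real.pi_pos
  rcases le_total p 1 with hp | hp
  · exact ⟨2 ^ (2 / p) / Real.pi, by positivity, fun f w R hf hR ⟨B, hB⟩ =>
      submean_le_one hp0 hp hf hR hB⟩
  · refine ⟨1, one_pos, fun f w R hf hR _ => ?_⟩
    rw [ENNReal.ofReal_one, one_mul]
    refine le_trans ?_ (submean_ge_one hp hf hR)
    gcongr
    nlinarith [Real.pi_gt_three, sq_nonneg R]

lemma lintegral_dA (S : Set ℂ) (g : ℂ → ℝ≥0∞) :
    ∫⁻ u in S, g u ∂dA = (ENNReal.ofReal Real.pi)⁻¹ * ∫⁻ u in S, g u := by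
  rw [dA, Measure.restrict_smul, lintegral_smul_measure, smul_eq_mul]

lemma lintegral_volume (S : Set ℂ) (g : ℂ → ℝ≥0∞) :
    ∫⁻ u in S, g u = ENNReal.ofReal Real.pi * ∫⁻ u in S, g u ∂dA := by
  rw [lintegral_dA, ← mul_assoc, ENNReal.mul_inv_cancel (by simpa using Real.pi_pos)
    ENNReal.ofReal_ne_top, one_mul]

lemma sfinite_dA : SFinite dA := by
  unfold dA; infer_instance

lemma delta_pos {z : ℂ} (hz : z ∈ ball (0 : ℂ) 1) : 0 < 1 - ‖z‖ ^ 2 := by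
  have : ‖z‖ < 1 := by simpa using hz
  nlinarith [norm_nonneg z]

/-- The quantity `1 - |w|²` is essentially constant on disks of radius `(1 - |w|)/2`. -/
lemma delta_comp {u w : ℂ} (hw : w ∈ ball (0 : ℂ) 1) (h : dist u w ≤ (1 - ‖w‖) / 2) :
    u ∈ ball (0 : ℂ) 1 ∧ 1 - ‖u‖ ^ 2 ≤ 4 * (1 - ‖w‖ ^ 2) ∧
      1 - ‖w‖ ^ 2 ≤ 4 * (1 - ‖u‖ ^ 2) := by
  have hw1 : ‖w‖ < 1 := by simpa using hw
  rw [dist_eq_norm] at h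
  have h1 := norm_sub_norm_le u w
  have h2 := norm_sub_norm_le w u
  rw [norm_sub_rev] at h2
  have := norm_nonneg u
  have := norm_nonneg w
  refine ⟨by simp; linarith, by nlinarith, by nlinarith⟩

lemma rpow_comp {A B : ℝ} (hA : 0 < A) (hB : 0 < B) (h1 : A ≤ 4 * B) (h2 : B ≤ 4 * A) (x : ℝ) :
    A ^ x ≤ 4 ^ |x| * B ^ x := by
  rcases le_total 0 x with hx | hx
  · rw [abs_of_nonneg hx, ← Real.mul_rpow (by norm_num) hB.le]
    exact Real.rpow_le_rpow hA.le h1 hx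
  · rw [abs_of_nonpos hx]
    have e : (4 : ℝ) ^ (-x) * B ^ x = (B / 4) ^ x := by
      rw [Real.div_rpow hB.le (by norm_num), Real.rpow_neg (by norm_num)]; ring
    rw [e]
    exact Real.rpow_le_rpow_of_nonpos (by positivity) (by linarith) hx

/-- Weighted pointwise estimate: `‖f w‖ ^ p (1-|w|²) ^ (a+2)` is controlled by the weighted
integral of `‖f‖ ^ p` over a disk around `w` whose radius is proportional to `1-|w|`. -/
lemma point_est {p a κ : ℝ} (hp0 : 0 < p) (ha : -1 < a) (hκ0 : 0 < κ) (hκ : κ ≤ 1 / 2) :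
    ∃ C : ℝ, 0 < C ∧ ∀ f : ℂ → ℂ, DifferentiableOn ℂ f (ball 0 1) → ∀ w ∈ ball (0 : ℂ) 1,
      ‖f w‖ₑ ^ p * ENNReal.ofReal ((1 - ‖w‖ ^ 2) ^ (a + 2)) ≤
        ENNReal.ofReal C * ∫⁻ u in ball w (κ * (1 - ‖w‖)),
          ‖f u‖ₑ ^ p * ENNReal.ofReal (stdW a u) ∂dA := by
  obtain ⟨C1, hC1, H⟩ := submean hp0
  have hpi := Real.pi_pos
  have ha1 : 0 < 1 + a := by linarith
  refine ⟨4 / κ ^ 2 * (C1 * (4 ^ |a| / (1 + a)) * Real.pi), by positivity, fun f hf w hw => ?_⟩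
  have hw1 : ‖w‖ < 1 := by simpa using hw
  have hδ := delta_pos hw
  set R := κ * (1 - ‖w‖) with hR
  have hR0 : 0 < R := mul_pos hκ0 (by linarith)
  have hRle : R ≤ (1 - ‖w‖) / 2 := by
    rw [hR]; nlinarith
  have hcl : closedBall w R ⊆ ball (0 : ℂ) 1 := fun u hu =>
    (delta_comp hw (le_trans hu hRle)).1
  have hsub : ball w R ⊆ ball (0 : ℂ) 1 := ball_subset_closedBall.trans hcl
  obtain ⟨B, hB⟩ := (isCompact_closedBall w R).exists_bound_of_continuousOn
    (hf.continuousOn.mono hcl)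
  have h1 := H f w R (hf.mono hsub) hR0 ⟨B, fun u hu => hB u (ball_subset_closedBall hu)⟩
  have hpt : ∀ u ∈ ball w R, ‖f u‖ₑ ^ p * ENNReal.ofReal ((1 - ‖w‖ ^ 2) ^ a) ≤
      ENNReal.ofReal (4 ^ |a| / (1 + a)) * (‖f u‖ₑ ^ p * ENNReal.ofReal (stdW a u)) := by
    intro u hu
    obtain ⟨hu1, h2, h3⟩ := delta_comp hw (le_trans (le_of_lt hu) hRle)
    rw [mul_left_comm, ← ENNReal.ofReal_mul (by positivity)]
    gcongr
    refine (rpow_comp hδ (delta_pos hu1) h3 h2 a).trans (le_of_eq ?_)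
    rw [stdW]; field_simp
  have hpow : (1 - ‖w‖ ^ 2) ^ (a + 2) ≤ 4 / κ ^ 2 * (R ^ 2 * (1 - ‖w‖ ^ 2) ^ a) := by
    rw [Real.rpow_add hδ, hR]
    have : (1 - ‖w‖ ^ 2) ^ (2 : ℝ) = (1 - ‖w‖ ^ 2) ^ 2 := by norm_cast
    rw [this]
    have h5 : (1 - ‖w‖ ^ 2) ^ 2 ≤ 4 * (1 - ‖w‖) ^ 2 := by
      have := norm_nonneg w
      have : (1 - ‖w‖ ^ 2) ≤ 2 * (1 - ‖w‖) := by nlinarith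
      nlinarith
    have h6 : 0 ≤ (1 - ‖w‖ ^ 2) ^ a := by positivity
    calc _ ≤ (1 - ‖w‖ ^ 2) ^ a * (4 * (1 - ‖w‖) ^ 2) := by gcongr
      _ = _ := by field_simp
  calc ‖f w‖ₑ ^ p * ENNReal.ofReal ((1 - ‖w‖ ^ 2) ^ (a + 2))
      ≤ ‖f w‖ₑ ^ p * ENNReal.ofReal (4 / κ ^ 2 * (R ^ 2 * (1 - ‖w‖ ^ 2) ^ a)) := by gcongr
    _ = ENNReal.ofReal (4 / κ ^ 2) * (‖f w‖ₑ ^ p * ENNReal.ofReal (R ^ 2) *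
          ENNReal.ofReal ((1 - ‖w‖ ^ 2) ^ a)) := by
        rw [ENNReal.ofReal_mul (by positivity), ENNReal.ofReal_mul (by positivity)]; ring
    _ ≤ ENNReal.ofReal (4 / κ ^ 2) * (ENNReal.ofReal C1 * (∫⁻ u in ball w R, ‖f u‖ₑ ^ p) *
          ENNReal.ofReal ((1 - ‖w‖ ^ 2) ^ a)) := by gcongr
    _ = ENNReal.ofReal (4 / κ ^ 2) * (ENNReal.ofReal C1 * ∫⁻ u in ball w R, ‖f u‖ₑ ^ p *
          ENNReal.ofReal ((1 - ‖w‖ ^ 2) ^ a)) := by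
        rw [lintegral_mul_const' _ _ ENNReal.ofReal_ne_top, mul_assoc]
    _ ≤ ENNReal.ofReal (4 / κ ^ 2) * (ENNReal.ofReal C1 * ∫⁻ u in ball w R,
          ENNReal.ofReal (4 ^ |a| / (1 + a)) * (‖f u‖ₑ ^ p * ENNReal.ofReal (stdW a u))) := by
        gcongr _ * (_ * ?_)
        exact setLIntegral_mono' measurableSet_ball hpt
    _ = _ := by
        rw [lintegral_const_mul' _ _ ENNReal.ofReal_ne_top, lintegral_volume,
          ENNReal.ofReal_mul (by positivity), ENNReal.ofReal_mul (by positivity),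
          ENNReal.ofReal_mul hC1.le]
        ring

/-! ### Forelli–Rudin estimate -/

lemma lint_tail {s ε : ℝ} (hs : 1 < s) (hε : 0 < ε) :
    ∫⁻ t in Ioi ε, ENNReal.ofReal (t ^ (-s)) = ENNReal.ofReal (ε ^ (1 - s) / (s - 1)) := by
  rw [← ofReal_integral_eq_lintegral_ofReal (integrableOn_Ioi_rpow_of_lt (by linarith) hε),
    integral_Ioi_rpow_of_lt (by linarith) hε]
  · congr 1
    rw [show -s + 1 = 1 - s by ring, show s - 1 = -(1 - s) by ring, div_neg, neg_div]
  · filter_upwards [ae_restrict_mem measurableSet_Ioi] with t ht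
    exact Real.rpow_nonneg (hε.trans ht).le _

lemma lint_head {a ε : ℝ} (ha : -1 < a) (hε : 0 < ε) :
    ∫⁻ t in Ioc 0 ε, ENNReal.ofReal (t ^ a) = ENNReal.ofReal (ε ^ (a + 1) / (a + 1)) := by
  have hi := (intervalIntegral.intervalIntegrable_rpow' (a := 0) (b := ε) ha)
  rw [← ofReal_integral_eq_lintegral_ofReal
    ((intervalIntegrable_iff_integrableOn_Ioc_of_le hε.le).1 hi),
    ← intervalIntegral.integral_of_le hε.le, integral_rpow (Or.inl ha), Real.zero_rpow (by linarith),
    sub_zero]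
  filter_upwards [ae_restrict_mem measurableSet_Ioc] with t ht
  exact Real.rpow_nonneg ht.1.le _

lemma radial_est {a s : ℝ} (ha : -1 < a) (hs : a + 1 < s) : ∃ C : ℝ, 0 < C ∧ ∀ ε : ℝ, 0 < ε →
    ∫⁻ t in Ioi 0, ENNReal.ofReal (t ^ a * (ε + t) ^ (-s)) ≤
      ENNReal.ofReal (C * ε ^ (a + 1 - s)) := by
  have h1 : 0 < a + 1 := by linarith
  have h2 : 0 < s - a - 1 := by linarith
  refine ⟨1 / (a + 1) + 1 / (s - a - 1), by positivity, fun ε hε => ?_⟩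
  rw [← Ioc_union_Ioi_eq_Ioi hε.le]
  refine (lintegral_union_le _ _ _).trans ?_
  have hA : ∫⁻ t in Ioc 0 ε, ENNReal.ofReal (t ^ a * (ε + t) ^ (-s)) ≤
      ENNReal.ofReal (ε ^ (a + 1) / (a + 1) * ε ^ (-s)) := by
    rw [ENNReal.ofReal_mul (by positivity), ← lint_head ha hε,
      ← lintegral_mul_const' _ _ ENNReal.ofReal_ne_top]
    refine setLIntegral_mono' measurableSet_Ioc fun t ht => ?_
    rw [← ENNReal.ofReal_mul (Real.rpow_nonneg ht.1.le _)]
    refine ENNReal.ofReal_le_ofReal ?_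
    have := ht.1
    exact mul_le_mul_of_nonneg_left
      (Real.rpow_le_rpow_of_nonpos hε (by linarith) (by linarith)) (by positivity)
  have hB : ∫⁻ t in Ioi ε, ENNReal.ofReal (t ^ a * (ε + t) ^ (-s)) ≤
      ENNReal.ofReal (ε ^ (1 - (s - a)) / ((s - a) - 1)) := by
    rw [← lint_tail (by linarith) hε]
    refine setLIntegral_mono' measurableSet_Ioi fun t ht => ENNReal.ofReal_le_ofReal ?_
    have ht0 : 0 < t := hε.trans ht
    rw [show -(s - a) = a + -s by ring, Real.rpow_add ht0]
    exact mul_le_mul_of_nonneg_left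
      (Real.rpow_le_rpow_of_nonpos ht0 (by linarith) (by linarith)) (by positivity)
  refine (add_le_add hA hB).trans (le_of_eq ?_)
  rw [← ENNReal.ofReal_add (by positivity) (by rw [show s - a - 1 = s - a - 1 from rfl]; positivity)]
  congr 1
  have e : ε ^ (a + 1 - s) = ε ^ (a + 1) * ε ^ (-s) := by rw [← Real.rpow_add hε]; ring_nf
  rw [show 1 - (s - a) = a + 1 - s by ring, e]
  ring

lemma angular_est {s : ℝ} (hs : 1 < s) : ∃ C : ℝ, 0 < C ∧ ∀ ε : ℝ, 0 < ε →
    ∫⁻ θ : ℝ, ENNReal.ofReal ((ε + |θ|) ^ (-s)) ≤ ENNReal.ofReal (C * ε ^ (1 - s)) := by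
  have h1 : 0 < s - 1 := by linarith
  refine ⟨2 / (s - 1), by positivity, fun ε hε => ?_⟩
  have hpos : ∫⁻ θ in Ioi (0 : ℝ), ENNReal.ofReal ((ε + |θ|) ^ (-s)) =
      ENNReal.ofReal (ε ^ (1 - s) / (s - 1)) := by
    rw [← lint_tail hs hε]
    have := lintegral_add_left_eq_self (μ := (volume : Measure ℝ))
      ((Ioi ε).indicator fun t => ENNReal.ofReal (t ^ (-s))) ε
    rw [← lintegral_indicator measurableSet_Ioi, ← lintegral_indicator measurableSet_Ioi, ← this]
    congr 1; ext θ
    by_cases hθ : 0 < θ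
    · simp [hθ, abs_of_pos hθ]
    · simp [hθ]
  have hneg : ∫⁻ θ in Iio (0 : ℝ), ENNReal.ofReal ((ε + |θ|) ^ (-s)) =
      ENNReal.ofReal (ε ^ (1 - s) / (s - 1)) := by
    rw [← hpos, ← lintegral_indicator measurableSet_Ioi, ← lintegral_indicator measurableSet_Iio,
      ← lintegral_neg_eq_self]
    congr 1; ext θ
    by_cases hθ : 0 < θ <;> simp [hθ]
  have hset : (univ : Set ℝ) =ᵐ[volume] (Iio 0 ∪ Ioi 0 : Set ℝ) := by
    rw [Iio_union_Ioi]; exact (ae_eq_univ.2 (by simp)).symm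
  rw [← setLIntegral_univ, setLIntegral_congr hset]
  refine (lintegral_union_le _ _ _).trans (le_of_eq ?_)
  rw [hpos, hneg, ← ENNReal.ofReal_add (by positivity) (by positivity)]
  congr 1; ring

/-- In polar coordinates the kernel `|1 - y e^{iθ}|` dominates `(1 - y) + |θ|`, which decouples
the radial from the angular variable. -/
lemma kernel_lower {y θ : ℝ} (hy0 : 0 ≤ y) (hy1 : y ≤ 1) (hθ : |θ| ≤ Real.pi) :
    (1 - y) + |θ| ≤ 10 * ‖1 - (y : ℂ) * (Real.cos θ + Real.sin θ * I)‖ := by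
  have hsq : ‖1 - (y : ℂ) * (Real.cos θ + Real.sin θ * I)‖ ^ 2 =
      (1 - y) ^ 2 + 2 * y * (1 - Real.cos θ) := by
    rw [← Complex.normSq_eq_norm_sq, Complex.normSq_apply]
    simp only [sub_re, one_re, mul_re, ofReal_re, add_re, I_re, mul_zero, ofReal_im, I_im, mul_one,
      sub_self, add_zero, add_im, mul_im, zero_add, zero_mul, sub_zero, sub_im, one_im]
    nlinarith [Real.sin_sq_add_cos_sq θ]
  have hcos := Real.cos_le_one_sub_mul_cos_sq hθ
  have hpi := Real.pi_pos
  have hpi4 := Real.pi_lt_four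
  have h2 : θ ^ 2 / 8 ≤ 1 - Real.cos θ := by
    have : (1 : ℝ) / 8 ≤ 2 / Real.pi ^ 2 := by
      rw [div_le_div_iff₀ (by norm_num) (by positivity)]; nlinarith
    nlinarith [sq_nonneg θ]
  refine le_of_sq_le_sq ?_ (by positivity)
  rw [mul_pow, hsq]
  have hab := sq_abs θ
  have h0 := abs_nonneg θ
  rcases le_total y (1 / 2) with h | h
  · have h3 : 0 ≤ 2 * y * (1 - Real.cos θ) := by nlinarith [Real.cos_le_one θ]
    have h4 : (1 - y) + |θ| ≤ 10 * (1 - y) := by linarith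
    nlinarith
  · nlinarith [sq_nonneg ((1 - y) - |θ|), sq_nonneg (1 - y)]

lemma forelli_rudin_radial {a s : ℝ} (ha : -1 < a) (hs : a + 2 < s) :
    ∃ C : ℝ, 0 < C ∧ ∀ x : ℝ, 0 ≤ x → x < 1 →
      ∫⁻ w in ball (0 : ℂ) 1, ENNReal.ofReal (‖1 - (x : ℂ) * w‖ ^ (-s) * (1 - ‖w‖ ^ 2) ^ a) ≤
        ENNReal.ofReal (C * (1 - x) ^ (a + 2 - s)) := by
  -- the exponent is split as `s = (a + 1 + g) + (1 + g)`, so that both the radial integral (first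
  -- part) and the angular integral (second part) converge
  obtain ⟨g, hg, hg0⟩ : ∃ g : ℝ, s = a + 2 + 2 * g ∧ 0 < g := ⟨(s - a - 2) / 2, by ring, by linarith⟩
  obtain ⟨C1, hC1, H1⟩ := radial_est (a := a) (s := a + 1 + g) ha (by linarith)
  obtain ⟨C2, hC2, H2⟩ := angular_est (s := 1 + g) (by linarith)
  refine ⟨20 ^ s * 4 ^ |a| * C1 * C2, by positivity, fun x hx0 hx1 => ?_⟩
  set ε := 1 - x with hε
  have hε0 : 0 < ε := by linarith
  rw [← lintegral_indicator measurableSet_ball, ← Complex.lintegral_comp_polarCoord_symm,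
    polarCoord_target, Measure.volume_eq_prod, ← Measure.prod_restrict]
  set A : ℝ → ℝ≥0∞ := fun t => ENNReal.ofReal (20 ^ s * 4 ^ |a| * (t ^ a * (ε + t) ^ (-(a + 1 + g))))
  set F : ℝ → ℝ≥0∞ := (Ioo 0 1).indicator fun r => A (1 - r)
  set G : ℝ → ℝ≥0∞ := fun θ => ENNReal.ofReal ((ε + |θ|) ^ (-(1 + g)))
  have hAm : Measurable A := by fun_prop
  have hFm : Measurable F := (hAm.comp (by fun_prop)).indicator measurableSet_Ioo
  have hGm : Measurable G := by fun_prop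
  have hpt : ∀ p ∈ Ioi (0 : ℝ) ×ˢ Ioo (-Real.pi) Real.pi,
      ENNReal.ofReal p.1 • (ball (0 : ℂ) 1).indicator (fun w => ENNReal.ofReal
        (‖1 - (x : ℂ) * w‖ ^ (-s) * (1 - ‖w‖ ^ 2) ^ a)) (Complex.polarCoord.symm p) ≤
        F p.1 * G p.2 := by
    rintro ⟨r, θ⟩ ⟨hr, hθ⟩
    simp only [mem_Ioi] at hr
    have hθ' : |θ| ≤ Real.pi := abs_le.2 ⟨hθ.1.le, hθ.2.le⟩
    have hn : ‖(Complex.polarCoord.symm (r, θ) : ℂ)‖ = r := by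
      rw [Complex.norm_polarCoord_symm, abs_of_pos hr]
    by_cases hr1 : r < 1
    · rw [Set.indicator_of_mem (by rw [mem_ball_zero_iff, hn]; exact hr1), hn,
        Complex.polarCoord_symm_apply]
      simp only [F, G, A]
      rw [Set.indicator_of_mem (show r ∈ Ioo (0 : ℝ) 1 from ⟨hr, hr1⟩), smul_eq_mul]
      have ht : 0 < 1 - r := by linarith
      rw [← ENNReal.ofReal_mul hr.le, ← ENNReal.ofReal_mul (by positivity)]
      refine ENNReal.ofReal_le_ofReal ?_
      have hk := kernel_lower (y := x * r) (θ := θ) (by positivity) (by nlinarith) hθ'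
      have h0 := abs_nonneg θ
      have e0 : (1 : ℂ) - x * (((r : ℝ) : ℂ) * (Real.cos θ + Real.sin θ * I)) =
          1 - ((x * r : ℝ) : ℂ) * (Real.cos θ + Real.sin θ * I) := by push_cast; ring
      simp only at *
      rw [e0]
      set N := ‖1 - ((x * r : ℝ) : ℂ) * (Real.cos θ + Real.sin θ * I)‖
      have hk2 : (ε + (1 - r) + |θ|) / 20 ≤ N := by
        have : ε ≤ 1 - x * r := by rw [hε]; nlinarith
        have : 1 - r ≤ 1 - x * r := by nlinarith
        linarith
      have hT : 0 < ε + (1 - r) + |θ| := by positivity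
      have h5 : N ^ (-s) ≤ 20 ^ s * ((ε + (1 - r)) ^ (-(a + 1 + g)) * (ε + |θ|) ^ (-(1 + g))) := by
        calc N ^ (-s) ≤ ((ε + (1 - r) + |θ|) / 20) ^ (-s) :=
              Real.rpow_le_rpow_of_nonpos (by positivity) hk2 (by linarith)
          _ = 20 ^ s * ((ε + (1 - r) + |θ|) ^ (-(a + 1 + g)) *
                (ε + (1 - r) + |θ|) ^ (-(1 + g))) := by
              rw [← Real.rpow_add hT, Real.div_rpow hT.le (by norm_num),
                Real.rpow_neg (by norm_num : (0 : ℝ) ≤ 20), div_inv_eq_mul, mul_comm]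
              congr 2; rw [hg]; ring
          _ ≤ _ := by
              gcongr ?_ * (?_ * ?_)
              · exact Real.rpow_le_rpow_of_nonpos (by positivity) (by linarith) (by linarith)
              · exact Real.rpow_le_rpow_of_nonpos (by positivity) (by linarith) (by linarith)
      have h6 : (1 - r ^ 2) ^ a ≤ 4 ^ |a| * (1 - r) ^ a :=
        rpow_comp (by nlinarith) ht (by nlinarith) (by nlinarith) a
      have hδ : 0 < 1 - r ^ 2 := by nlinarith
      have hN0 : 0 ≤ N := norm_nonneg _
      calc r * (N ^ (-s) * (1 - r ^ 2) ^ a) ≤ 1 * (N ^ (-s) * (1 - r ^ 2) ^ a) := by gcongr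
        _ ≤ 1 * (20 ^ s * ((ε + (1 - r)) ^ (-(a + 1 + g)) * (ε + |θ|) ^ (-(1 + g))) *
              (4 ^ |a| * (1 - r) ^ a)) := by gcongr
        _ = _ := by ring
    · rw [Set.indicator_of_notMem (by rw [mem_ball_zero_iff, hn]; exact hr1)]; simp
  calc _ ≤ ∫⁻ p, F p.1 * G p.2 ∂((volume.restrict (Ioi 0)).prod
          (volume.restrict (Ioo (-Real.pi) Real.pi))) := by
        rw [Measure.prod_restrict]
        exact setLIntegral_mono' (measurableSet_Ioi.prod measurableSet_Ioo) hpt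
    _ = (∫⁻ r in Ioi 0, F r) * ∫⁻ θ in Ioo (-Real.pi) Real.pi, G θ :=
        lintegral_prod_mul hFm.aemeasurable hGm.aemeasurable
    _ ≤ ENNReal.ofReal (20 ^ s * 4 ^ |a| * (C1 * ε ^ (a + 1 - (a + 1 + g)))) *
          ENNReal.ofReal (C2 * ε ^ (1 - (1 + g))) := by
        refine mul_le_mul' ?_ ((setLIntegral_le_lintegral _ _).trans (H2 ε hε0))
        calc ∫⁻ r in Ioi 0, F r ≤ ∫⁻ r, F r := setLIntegral_le_lintegral _ _
          _ ≤ ∫⁻ r, (Ioi 0).indicator A (1 - r) := by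
              refine lintegral_mono fun r => ?_
              by_cases hr : r ∈ Ioo (0 : ℝ) 1
              · have : 1 - r ∈ Ioi (0 : ℝ) := by simpa using hr.2
                simp only [F]
                rw [Set.indicator_of_mem hr, Set.indicator_of_mem this]
              · simp only [F]
                rw [Set.indicator_of_notMem hr]; exact zero_le
          _ = ∫⁻ t in Ioi 0, A t := by
              rw [lintegral_sub_left_eq_self, lintegral_indicator measurableSet_Ioi]
          _ ≤ _ := by
              simp only [A]
              rw [ENNReal.ofReal_mul (p := 20 ^ s * 4 ^ |a|) (by positivity)]
              simp_rw [ENNReal.ofReal_mul (p := 20 ^ s * 4 ^ |a|) (by positivity)]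
              rw [lintegral_const_mul' _ _ ENNReal.ofReal_ne_top]
              gcongr
              exact H1 ε hε0
    _ = _ := by
        rw [← ENNReal.ofReal_mul (by positivity)]
        congr 1
        have : ε ^ (a + 2 - s) = ε ^ (a + 1 - (a + 1 + g)) * ε ^ (1 - (1 + g)) := by
          rw [← Real.rpow_add hε0, hg]; ring_nf
        rw [this]; ring

/-- Forelli–Rudin estimate. A rotation reduces it to the case of real nonnegative `z`. -/
lemma forelli_rudin {a s : ℝ} (ha : -1 < a) (hs : a + 2 < s) :
    ∃ C : ℝ, 0 < C ∧ ∀ z ∈ ball (0 : ℂ) 1,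
      ∫⁻ w in ball (0 : ℂ) 1,
        ENNReal.ofReal (‖1 - (starRingEnd ℂ) z * w‖ ^ (-s) * stdW a w) ∂dA ≤
        ENNReal.ofReal (C * (1 - ‖z‖ ^ 2) ^ (a + 2 - s)) := by
  obtain ⟨C1, hC1, H⟩ := forelli_rudin_radial ha hs
  have hpi := Real.pi_pos
  have ha1 : 0 < 1 + a := by linarith
  refine ⟨Real.pi⁻¹ * (1 + a) * (C1 * 4 ^ |a + 2 - s|), by positivity, fun z hz => ?_⟩
  have hz1 : ‖z‖ < 1 := by simpa using hz
  have hδ := delta_pos hz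
  obtain ⟨c, hc⟩ : ∃ c : Circle, (starRingEnd ℂ) z = ‖z‖ * (c : ℂ) := by
    refine ⟨Circle.exp (arg ((starRingEnd ℂ) z)), ?_⟩
    conv_lhs => rw [← norm_mul_exp_arg_mul_I ((starRingEnd ℂ) z)]
    simp
  have hrot := (rotation c).measurePreserving.setLIntegral_comp_preimage_emb
    (rotation c).toHomeomorph.measurableEmbedding
    (fun w => ENNReal.ofReal (‖1 - (‖z‖ : ℂ) * w‖ ^ (-s) * (1 - ‖w‖ ^ 2) ^ a)) (ball 0 1)
  have hpre : (rotation c) ⁻¹' ball (0 : ℂ) 1 = ball 0 1 := by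
    ext w
    rw [mem_preimage, mem_ball_zero_iff, mem_ball_zero_iff, LinearIsometryEquiv.norm_map]
  rw [hpre] at hrot
  have e : ∀ w, ENNReal.ofReal (‖1 - (starRingEnd ℂ) z * w‖ ^ (-s) * stdW a w) =
      ENNReal.ofReal (1 + a) * ENNReal.ofReal
        (‖1 - (‖z‖ : ℂ) * rotation c w‖ ^ (-s) * (1 - ‖rotation c w‖ ^ 2) ^ a) := fun w => by
    rw [← ENNReal.ofReal_mul ha1.le, LinearIsometryEquiv.norm_map, rotation_apply, hc, stdW]
    congr 1; ring_nf
  simp_rw [e]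
  rw [lintegral_dA, lintegral_const_mul' _ _ ENNReal.ofReal_ne_top, hrot,
    ← ENNReal.ofReal_inv_of_pos hpi, ← mul_assoc, ← ENNReal.ofReal_mul (by positivity)]
  refine (mul_le_mul_right (H ‖z‖ (norm_nonneg _) hz1) _).trans ?_
  rw [← ENNReal.ofReal_mul (by positivity)]
  refine ENNReal.ofReal_le_ofReal ?_
  rw [mul_assoc (_ * _) (_ * _)]
  have h1 := rpow_comp (A := 1 - ‖z‖) (B := 1 - ‖z‖ ^ 2) (by linarith) hδ
    (by nlinarith [norm_nonneg z]) (by nlinarith [norm_nonneg z]) (a + 2 - s)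
  rw [mul_assoc C1]
  gcongr

lemma lintegral_stdW_lt_top {a : ℝ} (ha : -1 < a) :
    ∫⁻ w in ball (0 : ℂ) 1, ENNReal.ofReal (stdW a w) ∂dA < ⊤ := by
  obtain ⟨C, -, H⟩ := forelli_rudin ha (lt_add_one (a + 2))
  refine lt_of_le_of_lt ?_ ((H 0 (by simp)).trans_lt ENNReal.ofReal_lt_top)
  simp

/-! ### Sufficiency -/

lemma measurable_stdW (a : ℝ) : Measurable fun z => ENNReal.ofReal (stdW a z) := by
  unfold stdW; fun_prop

lemma wnorm_eq {p : ℝ} (hp : 0 < p) (a : ℝ) (f : ℂ → ℂ) :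
    wnorm p a f = (∫⁻ z in ball (0 : ℂ) 1,
      ‖f z‖ₑ ^ p * ENNReal.ofReal (stdW a z) ∂dA) ^ (1 / p) := by
  unfold wnorm
  congr 1
  refine lintegral_congr fun z => ?_
  rw [ENNReal.ofReal_mul (by positivity), ← ofReal_norm,
    ENNReal.ofReal_rpow_of_nonneg (norm_nonneg _) hp.le]

lemma mem_pD_of_dist {u w : ℂ} {r : ℝ} (hr0 : 0 < r) (hr1 : r < 1) (hu : u ∈ ball (0 : ℂ) 1)
    (hw : w ∈ ball (0 : ℂ) 1) (h : dist u w < r / 2 * (1 - ‖w‖)) : w ∈ pD u r := by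
  refine ⟨hw, ?_⟩
  have hu1 : ‖u‖ < 1 := by simpa using hu
  have hw1 : ‖w‖ < 1 := by simpa using hw
  rw [dist_eq_norm] at h
  have h1 := norm_sub_norm_le u w
  have h2 : 1 - ‖u‖ ≤ ‖1 - (starRingEnd ℂ) u * w‖ := by
    have h3 := norm_sub_norm_le (1 : ℂ) ((starRingEnd ℂ) u * w)
    rw [norm_one, norm_mul, RCLike.norm_conj] at h3
    nlinarith [norm_nonneg u, norm_nonneg w]
  rw [norm_div, div_lt_iff₀ (by linarith)]
  nlinarith [norm_nonneg (u - w)]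

lemma rpow_sub_one_mul {x : ℝ} (hx : 0 ≤ x - 1) (J : ℝ≥0∞) : J ^ x = J ^ (x - 1) * J := by
  have h := ENNReal.rpow_add_of_nonneg (x := J) _ _ hx zero_le_one
  rwa [sub_add_cancel, ENNReal.rpow_one] at h

/-- A measure satisfying the Carleson-type growth condition of order `(a+2)/p + τ` yields a bounded
embedding of the weighted `L^p` space of polynomials into `L¹((1-|w|²)^(-τ) dμ)`. -/
lemma carleson_embedding {p a τ r C : ℝ} (hp0 : 0 < p) (hp1 : p ≤ 1) (ha : -1 < a)
    (hr0 : 0 < r) (hr1 : r < 1) (μ : Measure ℂ) [IsFiniteMeasure μ]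
    (H : ∀ z ∈ ball (0 : ℂ) 1, μ (pD z r) ≤
      ENNReal.ofReal (C * (1 - ‖z‖ ^ 2) ^ ((a + 2) / p + τ))) :
    ∃ K : ℝ≥0∞, K ≠ ⊤ ∧ ∀ P : Polynomial ℂ,
      ∫⁻ w in ball (0 : ℂ) 1, ‖P.eval w‖ₑ * ENNReal.ofReal ((1 - ‖w‖ ^ 2) ^ (-τ)) ∂μ ≤
        K * (∫⁻ u in ball (0 : ℂ) 1, ‖P.eval u‖ₑ ^ p * ENNReal.ofReal (stdW a u) ∂dA) ^ (1 / p) := by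
  have := sfinite_dA
  obtain ⟨C0, hC0, H0⟩ := point_est (κ := r / 2) hp0 ha (by linarith) (by linarith)
  set s := (a + 2) / p + τ with hs
  refine ⟨ENNReal.ofReal C0 ^ (1 / p) * ENNReal.ofReal (4 ^ |(-s)| * C), by finiteness,
    fun P => ?_⟩
  have hPc : Continuous fun w => P.eval w := P.continuous
  set N := ∫⁻ u in ball (0 : ℂ) 1, ‖P.eval u‖ₑ ^ p * ENNReal.ofReal (stdW a u) ∂dA with hN
  set h : ℂ → ℝ≥0∞ := fun u => ‖P.eval u‖ₑ ^ p * ENNReal.ofReal (stdW a u) with hh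
  have hhm : Measurable h := (hPc.measurable.enorm.pow_const p).mul (measurable_stdW a)
  set T : Set (ℂ × ℂ) := {x | dist x.2 x.1 < r / 2 * (1 - ‖x.1‖)} with hT
  have hTm : MeasurableSet T := measurableSet_lt (by fun_prop) (by fun_prop)
  set Φ : ℂ × ℂ → ℝ≥0∞ := T.indicator
    fun x => ENNReal.ofReal ((1 - ‖x.1‖ ^ 2) ^ (-s)) * h x.2 with hΦ
  have hΦm : Measurable Φ :=
    (Measurable.mul (by fun_prop) (hhm.comp measurable_snd)).indicator hTm
  have hp1' : 0 ≤ 1 / p - 1 := by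
    rw [sub_nonneg, le_div_iff₀ hp0]; linarith
  -- in the pointwise estimate, `J ^ (1 / p)` is replaced by `N ^ (1 / p - 1) * J`; this linearizes
  -- the bound in the local integral `J`, and here `p ≤ 1` enters
  have hpt : ∀ w ∈ ball (0 : ℂ) 1, ‖P.eval w‖ₑ * ENNReal.ofReal ((1 - ‖w‖ ^ 2) ^ (-τ)) ≤
      ENNReal.ofReal C0 ^ (1 / p) * N ^ (1 / p - 1) * ∫⁻ u in ball (0 : ℂ) 1, Φ (w, u) ∂dA := by
    intro w hw
    have hδ := delta_pos hw
    have hw1 : ‖w‖ < 1 := by simpa using hw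
    have hsub : ball w (r / 2 * (1 - ‖w‖)) ⊆ ball (0 : ℂ) 1 := fun u hu =>
      (delta_comp hw ((le_of_lt hu).trans (by nlinarith))).1
    set J := ∫⁻ u in ball w (r / 2 * (1 - ‖w‖)), h u ∂dA with hJ
    have hJN : J ≤ N := lintegral_mono_set hsub
    have h0 : ‖P.eval w‖ₑ ^ p * ENNReal.ofReal ((1 - ‖w‖ ^ 2) ^ (a + 2)) ≤
        ENNReal.ofReal C0 * J := H0 _ P.differentiable.differentiableOn w hw
    have h1 : ‖P.eval w‖ₑ ^ p ≤
        ENNReal.ofReal C0 * J * ENNReal.ofReal ((1 - ‖w‖ ^ 2) ^ (-(a + 2))) := by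
      refine le_trans (le_of_eq ?_) (mul_le_mul_left h0 _)
      rw [mul_assoc, ← ENNReal.ofReal_mul (by positivity), ← Real.rpow_add hδ]
      simp
    have h2 : ‖P.eval w‖ₑ ≤ ENNReal.ofReal C0 ^ (1 / p) * (N ^ (1 / p - 1) * J) *
        ENNReal.ofReal ((1 - ‖w‖ ^ 2) ^ (-((a + 2) / p))) := by
      have h3 := ENNReal.rpow_le_rpow h1 (z := 1 / p) (by positivity)
      rw [← ENNReal.rpow_mul, mul_one_div_cancel hp0.ne', ENNReal.rpow_one,
        ENNReal.mul_rpow_of_nonneg _ _ (by positivity),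
        ENNReal.mul_rpow_of_nonneg _ _ (by positivity),
        ENNReal.ofReal_rpow_of_nonneg (p := 1 / p) (Real.rpow_nonneg hδ.le _) (by positivity),
        ← Real.rpow_mul hδ.le] at h3
      refine h3.trans ?_
      rw [show -(a + 2) * (1 / p) = -((a + 2) / p) by ring]
      gcongr
      calc J ^ (1 / p) = J ^ (1 / p - 1) * J := rpow_sub_one_mul hp1' J
        _ ≤ _ := by gcongr
    have e1 : ∫⁻ u in ball (0 : ℂ) 1, Φ (w, u) ∂dA = ENNReal.ofReal ((1 - ‖w‖ ^ 2) ^ (-s)) * J := by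
      rw [hJ, ← lintegral_const_mul' _ _ ENNReal.ofReal_ne_top,
        ← lintegral_indicator measurableSet_ball, ← lintegral_indicator measurableSet_ball]
      refine lintegral_congr fun u => ?_
      by_cases hu : u ∈ ball w (r / 2 * (1 - ‖w‖))
      · have hu' : (w, u) ∈ T := hu
        rw [Set.indicator_of_mem hu, Set.indicator_of_mem (hsub hu), hΦ, Set.indicator_of_mem hu']
      · have hu' : (w, u) ∉ T := hu
        rw [Set.indicator_of_notMem hu, hΦ]
        by_cases hu1 : u ∈ ball (0 : ℂ) 1
        · rw [Set.indicator_of_mem hu1, Set.indicator_of_notMem hu']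
        · rw [Set.indicator_of_notMem hu1]
    rw [e1]
    calc _ ≤ ENNReal.ofReal C0 ^ (1 / p) * (N ^ (1 / p - 1) * J) *
        ENNReal.ofReal ((1 - ‖w‖ ^ 2) ^ (-((a + 2) / p))) *
          ENNReal.ofReal ((1 - ‖w‖ ^ 2) ^ (-τ)) := by gcongr
      _ = ENNReal.ofReal C0 ^ (1 / p) * (N ^ (1 / p - 1) * J) *
          ENNReal.ofReal ((1 - ‖w‖ ^ 2) ^ (-s)) := by
        rw [mul_assoc, ← ENNReal.ofReal_mul (by positivity), ← Real.rpow_add hδ, hs]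
        congr 3; ring_nf
      _ = _ := by ring
  have hinner : ∀ u ∈ ball (0 : ℂ) 1, ∫⁻ w in ball (0 : ℂ) 1, Φ (w, u) ∂μ ≤
      ENNReal.ofReal (4 ^ |(-s)| * C) * h u := by
    intro u hu
    have hδu := delta_pos hu
    set S : Set ℂ := {w | w ∈ ball (0 : ℂ) 1 ∧ dist u w < r / 2 * (1 - ‖w‖)} with hS
    have hSm : MeasurableSet S :=
      measurableSet_ball.inter (measurableSet_lt (f := fun w => dist u w)
        (g := fun w => r / 2 * (1 - ‖w‖)) (by fun_prop) (by fun_prop))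
    have hSsub : S ⊆ pD u r := fun w hw => mem_pD_of_dist hr0 hr1 hu hw.1 hw.2
    calc ∫⁻ w in ball (0 : ℂ) 1, Φ (w, u) ∂μ
        ≤ ∫⁻ w, S.indicator (fun _ =>
            ENNReal.ofReal (4 ^ |(-s)| * (1 - ‖u‖ ^ 2) ^ (-s)) * h u) w ∂μ := by
          rw [← lintegral_indicator measurableSet_ball]
          refine lintegral_mono fun w => ?_
          by_cases hw : w ∈ S
          · have hw' : (w, u) ∈ T := hw.2
            have hw1 : ‖w‖ < 1 := by simpa using hw.1
            obtain ⟨-, h2, h3⟩ := delta_comp hw.1 (hw.2.le.trans (by nlinarith))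
            rw [Set.indicator_of_mem hw, Set.indicator_of_mem hw.1, hΦ, Set.indicator_of_mem hw']
            simp only
            gcongr
            exact rpow_comp (delta_pos hw.1) hδu h3 h2 _
          · rw [Set.indicator_of_notMem hw]
            by_cases hwb : w ∈ ball (0 : ℂ) 1
            · have hw' : (w, u) ∉ T := fun h => hw ⟨hwb, h⟩
              rw [Set.indicator_of_mem hwb, hΦ, Set.indicator_of_notMem hw']
            · rw [Set.indicator_of_notMem hwb]
      _ = ENNReal.ofReal (4 ^ |(-s)| * (1 - ‖u‖ ^ 2) ^ (-s)) * h u * μ S := by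
          rw [lintegral_indicator_const hSm]
      _ ≤ ENNReal.ofReal (4 ^ |(-s)| * (1 - ‖u‖ ^ 2) ^ (-s)) * h u *
            ENNReal.ofReal (C * (1 - ‖u‖ ^ 2) ^ s) := by
          gcongr
          exact (measure_mono hSsub).trans (H u hu)
      _ = _ := by
          rw [mul_right_comm, ← ENNReal.ofReal_mul (by positivity)]
          congr 2
          calc _ = 4 ^ |(-s)| * C * ((1 - ‖u‖ ^ 2) ^ (-s) * (1 - ‖u‖ ^ 2) ^ s) := by ring
            _ = _ := by rw [← Real.rpow_add hδu]; simp
  calc _ ≤ ∫⁻ w in ball (0 : ℂ) 1, ENNReal.ofReal C0 ^ (1 / p) * N ^ (1 / p - 1) *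
          ∫⁻ u in ball (0 : ℂ) 1, Φ (w, u) ∂dA ∂μ := setLIntegral_mono' measurableSet_ball hpt
    _ = ENNReal.ofReal C0 ^ (1 / p) * N ^ (1 / p - 1) *
          ∫⁻ u in ball (0 : ℂ) 1, ∫⁻ w in ball (0 : ℂ) 1, Φ (w, u) ∂μ ∂dA := by
        rw [lintegral_const_mul _ hΦm.lintegral_prod_right',
          lintegral_lintegral_swap (f := fun w u => Φ (w, u)) hΦm.aemeasurable]
    _ ≤ ENNReal.ofReal C0 ^ (1 / p) * N ^ (1 / p - 1) *
          ∫⁻ u in ball (0 : ℂ) 1, ENNReal.ofReal (4 ^ |(-s)| * C) * h u ∂dA := by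
        gcongr _ * ?_
        exact setLIntegral_mono' measurableSet_ball hinner
    _ = _ := by
        rw [lintegral_const_mul' _ _ ENNReal.ofReal_ne_top, ← hN]
        rw [rpow_sub_one_mul hp1' N]; ring

lemma enorm_toep_le (μ : Measure ℂ) (b : ℝ) (f : ℂ → ℂ) (z : ℂ) :
    ‖Toep μ b f z‖ₑ ≤ ∫⁻ w in ball (0 : ℂ) 1,
      ‖f w‖ₑ * ENNReal.ofReal (‖1 - (starRingEnd ℂ) w * z‖ ^ (-(2 + b))) ∂μ := by
  refine (enorm_integral_le_lintegral_enorm _).trans (le_of_eq (lintegral_congr fun w => ?_))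
  rw [← ofReal_norm, norm_div, norm_cpow_real, div_eq_mul_inv, ← Real.rpow_neg (norm_nonneg _),
    ENNReal.ofReal_mul (norm_nonneg _), ofReal_norm, mul_comm z]

/-- Minkowski-type bound: the `L^q(ω_b)` norm of `T_{μ,b} f` is controlled by the
`L¹((1-|w|²)^(-(b+2)/q') dμ)` norm of `f`. It follows from Hölder's inequality, Tonelli's theorem
and the Forelli–Rudin estimate. -/
lemma toep_norm_le {q q' b : ℝ} (hq : 1 < q) (hq' : 1 / q + 1 / q' = 1) (hb : -1 < b)
    (μ : Measure ℂ) [IsFiniteMeasure μ] :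
    ∃ K : ℝ≥0∞, K ≠ ⊤ ∧ ∀ f : ℂ → ℂ, Measurable f →
      wnorm q b (Toep μ b f) ≤ K * ∫⁻ w in ball (0 : ℂ) 1,
        ‖f w‖ₑ * ENNReal.ofReal ((1 - ‖w‖ ^ 2) ^ (-((b + 2) / q'))) ∂μ := by
  have := sfinite_dA
  have hq0 : 0 < q := by linarith
  have hconj : q'.HolderConjugate q := by
    refine Real.HolderConjugate.symm ?_
    rw [Real.holderConjugate_iff]
    exact ⟨hq, by simpa using hq'⟩
  have hq'0 : 0 < q' := hconj.pos
  have hqq : q / q' = q - 1 := by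
    field_simp at hq' ⊢; linarith
  obtain ⟨C1, hC1, HF⟩ := forelli_rudin (a := b) (s := q * (2 + b)) hb (by nlinarith)
  refine ⟨ENNReal.ofReal C1 ^ (1 / q), by finiteness, fun f hf => ?_⟩
  set τ := (b + 2) / q' with hτ
  have hqτ : b + 2 - q * (2 + b) = -(q * τ) := by
    have : q * τ = (b + 2) * (q / q') := by rw [hτ]; ring
    rw [this, hqq]; ring
  set φ : ℂ → ℝ≥0∞ := fun w => ‖f w‖ₑ * ENNReal.ofReal ((1 - ‖w‖ ^ 2) ^ (-τ)) with hφ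
  set S := ∫⁻ w in ball (0 : ℂ) 1, φ w ∂μ with hS
  have hφm : Measurable φ := by fun_prop
  set E : ℂ → ℂ → ℝ≥0∞ := fun z w =>
    φ w * ENNReal.ofReal ((1 - ‖w‖ ^ 2) ^ (q * τ)) *
      ENNReal.ofReal (‖1 - (starRingEnd ℂ) w * z‖ ^ (-(q * (2 + b))) * stdW b z) with hE
  have hEm : Measurable (Function.uncurry E) := by
    have h1 : Measurable fun x : ℂ × ℂ => ‖1 - (starRingEnd ℂ) x.2 * x.1‖ := by
      have : Continuous fun x : ℂ × ℂ => ‖1 - (starRingEnd ℂ) x.2 * x.1‖ := by fun_prop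
      exact this.measurable
    have h2 : Measurable fun x : ℂ × ℂ => stdW b x.1 := by unfold stdW; fun_prop
    have h3 : Measurable fun x : ℂ × ℂ => φ x.2 * ENNReal.ofReal ((1 - ‖x.2‖ ^ 2) ^ (q * τ)) :=
      (hφm.comp measurable_snd).mul (by fun_prop)
    exact h3.mul ((h1.pow_const _).mul h2).ennreal_ofReal
  have hpt : ∀ z ∈ ball (0 : ℂ) 1, ‖Toep μ b f z‖ₑ ^ q * ENNReal.ofReal (stdW b z) ≤
      S ^ (q - 1) * ∫⁻ w in ball (0 : ℂ) 1, E z w ∂μ := by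
    intro z hz
    set k : ℂ → ℝ≥0∞ := fun w => ENNReal.ofReal ((1 - ‖w‖ ^ 2) ^ τ *
      ‖1 - (starRingEnd ℂ) w * z‖ ^ (-(2 + b))) with hk
    have hkm : Measurable k := by
      have h1 : Measurable fun w : ℂ => ‖1 - (starRingEnd ℂ) w * z‖ := by
        have : Continuous fun w : ℂ => ‖1 - (starRingEnd ℂ) w * z‖ := by fun_prop
        exact this.measurable
      have h2 : Measurable fun w : ℂ => (1 - ‖w‖ ^ 2) ^ τ := by fun_prop
      exact (h2.mul (h1.pow_const _)).ennreal_ofReal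
    have hG : ‖Toep μ b f z‖ₑ ≤ S ^ (1 / q') *
        (∫⁻ w in ball (0 : ℂ) 1, φ w * k w ^ q ∂μ) ^ (1 / q) := by
      refine (enorm_toep_le μ b f z).trans ?_
      have hH := ENNReal.lintegral_mul_le_Lp_mul_Lq (μ.restrict (ball 0 1)) hconj
        (f := fun w => φ w ^ (1 / q')) (g := fun w => φ w ^ (1 / q) * k w)
        (by fun_prop) (by fun_prop)
      refine le_trans (le_of_eq ?_) (hH.trans (le_of_eq ?_))
      · refine setLIntegral_congr_fun measurableSet_ball fun w hw => ?_
        have hδ := delta_pos hw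
        simp only [Pi.mul_apply]
        rw [← mul_assoc, ← ENNReal.rpow_add_of_nonneg _ _ (by positivity) (by positivity),
          add_comm (1 / q'), hq', ENNReal.rpow_one, hφ, hk]
        simp only
        rw [mul_assoc, ← ENNReal.ofReal_mul (by positivity), ← mul_assoc, ← Real.rpow_add hδ]
        simp
      · congr 2
        · refine lintegral_congr fun w => ?_
          rw [← ENNReal.rpow_mul, one_div_mul_cancel hq'0.ne', ENNReal.rpow_one]
        · refine lintegral_congr fun w => ?_
          rw [ENNReal.mul_rpow_of_nonneg _ _ hq0.le, ← ENNReal.rpow_mul,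
            one_div_mul_cancel hq0.ne', ENNReal.rpow_one]
    have hGq := ENNReal.rpow_le_rpow hG hq0.le
    rw [ENNReal.mul_rpow_of_nonneg _ _ hq0.le, ← ENNReal.rpow_mul, ← ENNReal.rpow_mul,
      one_div_mul_cancel hq0.ne', ENNReal.rpow_one, one_div_mul_eq_div, hqq] at hGq
    refine (mul_le_mul_left hGq _).trans (le_of_eq ?_)
    rw [mul_assoc, ← lintegral_mul_const' _ _ ENNReal.ofReal_ne_top]
    congr 1
    refine setLIntegral_congr_fun measurableSet_ball fun w hw => ?_
    have hδ := delta_pos hw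
    simp only [hE, hk]
    rw [ENNReal.ofReal_rpow_of_nonneg (by positivity) hq0.le, Real.mul_rpow (by positivity)
      (by positivity), ← Real.rpow_mul hδ.le, ← Real.rpow_mul (norm_nonneg _),
      ENNReal.ofReal_mul (by positivity), ENNReal.ofReal_mul (by positivity),
      show τ * q = q * τ by ring, show -(2 + b) * q = -(q * (2 + b)) by ring]
    ring
  have hinner : ∀ w ∈ ball (0 : ℂ) 1, ∫⁻ z in ball (0 : ℂ) 1, E z w ∂dA ≤
      ENNReal.ofReal C1 * φ w := by
    intro w hw
    have hδ := delta_pos hw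
    have hm : Measurable fun z : ℂ =>
        ENNReal.ofReal (‖1 - (starRingEnd ℂ) w * z‖ ^ (-(q * (2 + b))) * stdW b z) := by
      unfold stdW; fun_prop
    simp only [hE]
    rw [lintegral_const_mul _ hm]
    refine (mul_le_mul_right (HF w hw) _).trans (le_of_eq ?_)
    rw [mul_assoc, ← ENNReal.ofReal_mul (by positivity), mul_left_comm ((1 - ‖w‖ ^ 2) ^ (q * τ)),
      hqτ, ← Real.rpow_add hδ, add_neg_cancel, Real.rpow_zero, mul_one, mul_comm]
  rw [wnorm_eq hq0]
  have hmain : ∫⁻ z in ball (0 : ℂ) 1, ‖Toep μ b f z‖ₑ ^ q * ENNReal.ofReal (stdW b z) ∂dA ≤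
      ENNReal.ofReal C1 * S ^ q := by
    calc _ ≤ ∫⁻ z in ball (0 : ℂ) 1, S ^ (q - 1) * ∫⁻ w in ball (0 : ℂ) 1, E z w ∂μ ∂dA :=
          setLIntegral_mono' measurableSet_ball hpt
      _ = S ^ (q - 1) * ∫⁻ w in ball (0 : ℂ) 1, ∫⁻ z in ball (0 : ℂ) 1, E z w ∂dA ∂μ := by
          have hI : Measurable fun z => ∫⁻ w in ball (0 : ℂ) 1, E z w ∂μ :=
            hEm.lintegral_prod_right'
          rw [lintegral_const_mul _ hI, lintegral_lintegral_swap (f := E) hEm.aemeasurable]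
      _ ≤ S ^ (q - 1) * ∫⁻ w in ball (0 : ℂ) 1, ENNReal.ofReal C1 * φ w ∂μ := by
          gcongr _ * ?_
          exact setLIntegral_mono' measurableSet_ball hinner
      _ = _ := by
          rw [lintegral_const_mul _ hφm, ← hS, rpow_sub_one_mul (x := q) (by linarith) S]; ring
  refine (ENNReal.rpow_le_rpow hmain (by positivity)).trans (le_of_eq ?_)
  rw [ENNReal.mul_rpow_of_nonneg _ _ (by positivity), ← ENNReal.rpow_mul,
    mul_one_div_cancel hq0.ne', ENNReal.rpow_one]

lemma bounded_of_carleson {p q q' a b : ℝ} (hp0 : 0 < p) (hp1 : p ≤ 1) (hq : 1 < q)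
    (hq' : 1 / q + 1 / q' = 1) (hb : -1 < b) (ha : -1 < a)
    (μ : Measure ℂ) [IsFiniteMeasure μ] {r C : ℝ} (hr0 : 0 < r) (hr1 : r < 1)
    (H : ∀ z ∈ ball (0 : ℂ) 1, μ (pD z r) ≤
      ENNReal.ofReal (C * (1 - ‖z‖ ^ 2) ^ ((a + 2) / p + (b + 2) / q'))) :
    ∃ K : ℝ≥0, ∀ P : Polynomial ℂ,
      wnorm q b (Toep μ b fun z => P.eval z) ≤ K * wnorm p a fun z => P.eval z := by
  obtain ⟨K1, hK1, H1⟩ := toep_norm_le hq hq' hb μ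
  obtain ⟨K2, hK2, H2⟩ := carleson_embedding hp0 hp1 ha hr0 hr1 μ H
  refine ⟨(K1 * K2).toNNReal, fun P => ?_⟩
  rw [ENNReal.coe_toNNReal (ENNReal.mul_ne_top hK1 hK2), wnorm_eq hp0, mul_assoc]
  exact (H1 _ P.continuous.measurable).trans (mul_le_mul_right (H2 P) _)

/-! ### Necessity -/

/-- The derivatives of `T_{μ,b} f` are, up to constants, integrals of this type:
`∫ f(w) w̄ʲ (1 - u w̄)^(-s) dμ(w)`. -/
noncomputable def toepAux (μ : Measure ℂ) (s : ℝ) (j : ℕ) (f : ℂ → ℂ) (u : ℂ) : ℂ :=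
  ∫ w in ball (0 : ℂ) 1,
    f w * (starRingEnd ℂ) w ^ j * (1 - u * (starRingEnd ℂ) w) ^ ((-s : ℝ) : ℂ) ∂μ

lemma toep_eq_toepAux (μ : Measure ℂ) (b : ℝ) (f : ℂ → ℂ) :
    Toep μ b f = toepAux μ (2 + b) 0 f := by
  funext u
  refine integral_congr_ae (Eventually.of_forall fun w => ?_)
  simp only [pow_zero, mul_one]
  rw [div_eq_mul_inv, ← cpow_neg, ofReal_neg]

lemma norm_mul_conj_lt {v w : ℂ} (hv : v ∈ ball (0 : ℂ) 1) (hw : w ∈ ball (0 : ℂ) 1) :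
    ‖v * (starRingEnd ℂ) w‖ ≤ ‖v‖ ∧ ‖v‖ < 1 := by
  rw [mem_ball_zero_iff] at hv hw
  refine ⟨?_, hv⟩
  rw [norm_mul, RCLike.norm_conj]
  exact mul_le_of_le_one_right (norm_nonneg _) hw.le

lemma one_sub_mem_slitPlane {v w : ℂ} (hv : v ∈ ball (0 : ℂ) 1) (hw : w ∈ ball (0 : ℂ) 1) :
    1 - v * (starRingEnd ℂ) w ∈ slitPlane := by
  obtain ⟨h1, h2⟩ := norm_mul_conj_lt hv hw
  left
  have := re_le_norm (v * (starRingEnd ℂ) w)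
  simp only [sub_re, one_re]
  linarith

lemma le_norm_one_sub {v w : ℂ} (hv : v ∈ ball (0 : ℂ) 1) (hw : w ∈ ball (0 : ℂ) 1) :
    1 - ‖v‖ ≤ ‖1 - v * (starRingEnd ℂ) w‖ := by
  obtain ⟨h1, h2⟩ := norm_mul_conj_lt hv hw
  have := norm_sub_norm_le (1 : ℂ) (v * (starRingEnd ℂ) w)
  rw [norm_one] at this
  linarith

lemma norm_toepAux_integrand_le {s : ℝ} (hs : 0 ≤ s) (j : ℕ) {f : ℂ → ℂ} {M ρ : ℝ} (hρ : ρ < 1)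
    (hM : ∀ w ∈ ball (0 : ℂ) 1, ‖f w‖ ≤ M) {v w : ℂ} (hv : ‖v‖ ≤ ρ) (hw : w ∈ ball (0 : ℂ) 1) :
    ‖f w * (starRingEnd ℂ) w ^ j * (1 - v * (starRingEnd ℂ) w) ^ ((-s : ℝ) : ℂ)‖ ≤
      M * (1 - ρ) ^ (-s) := by
  have hv1 : v ∈ ball (0 : ℂ) 1 := by rw [mem_ball_zero_iff]; linarith
  have h1 := le_norm_one_sub hv1 hw
  have hw' := mem_ball_zero_iff.1 hw
  have h0 : 0 ≤ M := (norm_nonneg _).trans (hM w hw)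
  rw [norm_mul, norm_mul, norm_pow, RCLike.norm_conj, norm_cpow_real]
  refine mul_le_mul ?_ ?_ (by positivity) h0
  · exact (mul_le_of_le_one_right (norm_nonneg _) (pow_le_one₀ (norm_nonneg _) hw'.le)).trans
      (hM w hw)
  · exact Real.rpow_le_rpow_of_nonpos (by linarith) (by linarith) (by linarith)

lemma measurable_toepAux_integrand (s : ℝ) (j : ℕ) {f : ℂ → ℂ} (hf : Measurable f) (v : ℂ) :
    Measurable fun w : ℂ =>
      f w * (starRingEnd ℂ) w ^ j * (1 - v * (starRingEnd ℂ) w) ^ ((-s : ℝ) : ℂ) := by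
  have hc : Measurable fun w : ℂ => (starRingEnd ℂ) w := continuous_conj.measurable
  fun_prop

lemma hasDerivAt_toepAux (μ : Measure ℂ) [IsFiniteMeasure μ] {s : ℝ} (hs : 0 ≤ s) (j : ℕ)
    {f : ℂ → ℂ} (hf : Measurable f) {M : ℝ} (hM : ∀ w ∈ ball (0 : ℂ) 1, ‖f w‖ ≤ M) {u : ℂ}
    (hu : u ∈ ball (0 : ℂ) 1) :
    HasDerivAt (toepAux μ s j f) ((s : ℂ) * toepAux μ (s + 1) (j + 1) f u) u := by
  have hu' := mem_ball_zero_iff.1 hu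
  set ρ := (1 + ‖u‖) / 2 with hρ
  have hρ1 : ρ < 1 := by linarith
  have hball : ∀ v ∈ ball u ((1 - ‖u‖) / 2), ‖v‖ ≤ ρ ∧ v ∈ ball (0 : ℂ) 1 := by
    intro v hv
    rw [mem_ball, dist_eq_norm] at hv
    have : ‖v‖ ≤ ‖v - u‖ + ‖u‖ := by simpa using norm_add_le (v - u) u
    constructor
    · linarith
    · rw [mem_ball_zero_iff]; linarith
  have hmem := fun v => (measurable_toepAux_integrand s j hf v).aestronglyMeasurable
    (μ := μ.restrict (ball 0 1))
  have key := (hasDerivAt_integral_of_dominated_loc_of_deriv_le (𝕜 := ℂ)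
    (μ := μ.restrict (ball 0 1)) (x₀ := u)
    (F := fun v w => f w * (starRingEnd ℂ) w ^ j *
      (1 - v * (starRingEnd ℂ) w) ^ ((-s : ℝ) : ℂ))
    (F' := fun v w => (s : ℂ) * (f w * (starRingEnd ℂ) w ^ (j + 1) *
      (1 - v * (starRingEnd ℂ) w) ^ ((-(s + 1) : ℝ) : ℂ)))
    (bound := fun _ => s * (M * (1 - ρ) ^ (-(s + 1))))
    (ball_mem_nhds u (by linarith : 0 < (1 - ‖u‖) / 2))
    (Eventually.of_forall hmem) ?_ ?_ ?_ (integrable_const _) ?_).2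
  · refine key.congr_deriv ?_
    rw [integral_const_mul]
    rfl
  · refine Integrable.of_bound (hmem u) (M * (1 - ρ) ^ (-s)) ?_
    filter_upwards [ae_restrict_mem measurableSet_ball] with w hw
    exact norm_toepAux_integrand_le hs j hρ1 hM (by linarith) hw
  · exact ((measurable_toepAux_integrand (s + 1) (j + 1) hf u).const_mul _).aestronglyMeasurable
  · filter_upwards [ae_restrict_mem measurableSet_ball] with w hw v hv
    rw [norm_mul, norm_real, Real.norm_of_nonneg hs]
    exact mul_le_mul_of_nonneg_left
      (norm_toepAux_integrand_le (by linarith) (j + 1) hρ1 hM (hball v hv).1 hw) hs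
  · filter_upwards [ae_restrict_mem measurableSet_ball] with w hw v hv
    have hd : HasDerivAt (fun v : ℂ => 1 - v * (starRingEnd ℂ) w) (-(starRingEnd ℂ) w) v := by
      simpa using ((hasDerivAt_id v).mul_const ((starRingEnd ℂ) w)).const_sub 1
    have := (hd.cpow_const (c := ((-s : ℝ) : ℂ))
      (one_sub_mem_slitPlane (hball v hv).2 hw)).const_mul (f w * (starRingEnd ℂ) w ^ j)
    refine this.congr_deriv ?_
    rw [show ((-(s + 1) : ℝ) : ℂ) = ((-s : ℝ) : ℂ) - 1 by push_cast; ring]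
    push_cast
    ring

lemma iteratedDeriv_toepAux (μ : Measure ℂ) [IsFiniteMeasure μ] {s : ℝ} (hs : 0 ≤ s)
    {f : ℂ → ℂ} (hf : Measurable f) {M : ℝ} (hM : ∀ w ∈ ball (0 : ℂ) 1, ‖f w‖ ≤ M) (k : ℕ) :
    ∀ u ∈ ball (0 : ℂ) 1, iteratedDeriv k (toepAux μ s 0 f) u =
      ((∏ i ∈ Finset.range k, (s + i) : ℝ) : ℂ) * toepAux μ (s + k) k f u := by
  induction k with
  | zero => intro u _; simp
  | succ k ih =>
    intro u hu
    rw [iteratedDeriv_succ]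
    have hev : iteratedDeriv k (toepAux μ s 0 f) =ᶠ[𝓝 u] fun u =>
        ((∏ i ∈ Finset.range k, (s + i) : ℝ) : ℂ) * toepAux μ (s + k) k f u := by
      filter_upwards [isOpen_ball.mem_nhds hu] with v hv using ih v hv
    rw [hev.deriv_eq, ((hasDerivAt_toepAux μ (s := s + k) (by positivity) k hf hM hu).const_mul
      _).deriv, Finset.prod_range_succ]
    push_cast
    rw [add_assoc s]
    ring

/-- Cauchy's estimate combined with the pointwise estimate for `T_{μ,b} f`: the growth of the
`k`-th derivative of `T_{μ,b} f` is controlled by its `L^q(ω_b)` norm. -/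
lemma enorm_toepAux_le {q b : ℝ} (hq0 : 0 < q) (hb : -1 < b) (μ : Measure ℂ) [IsFiniteMeasure μ]
    (k : ℕ) : ∃ C : ℝ, 0 < C ∧ ∀ f : ℂ → ℂ, Measurable f →
      (∃ M : ℝ, ∀ w ∈ ball (0 : ℂ) 1, ‖f w‖ ≤ M) → ∀ z ∈ ball (0 : ℂ) 1,
      ‖toepAux μ (2 + b + k) k f z‖ₑ ≤
        ENNReal.ofReal (C * (1 - ‖z‖ ^ 2) ^ (-(k + (b + 2) / q))) * wnorm q b (Toep μ b f) := by
  obtain ⟨C1, hC1, H⟩ := point_est (p := q) (a := b) (κ := 1 / 2) hq0 hb (by norm_num) le_rfl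
  set τ := (b + 2) / q with hτ
  have hs : 0 ≤ 2 + b := by linarith
  refine ⟨k.factorial * (C1 ^ (1 / q) * 4 ^ |-τ|) * 4 ^ k, by positivity,
    fun f hf ⟨M, hM⟩ z hz => ?_⟩
  have hδ := delta_pos hz
  have hz1 : ‖z‖ < 1 := mem_ball_zero_iff.1 hz
  set W := wnorm q b (Toep μ b f) with hW
  rcases eq_or_ne W ⊤ with hWt | hWt
  · rw [hWt, ENNReal.mul_top]
    · exact le_top
    · rw [Ne, ENNReal.ofReal_eq_zero, not_le]; positivity
  set g := Toep μ b f with hg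
  have hgd : DifferentiableOn ℂ g (ball 0 1) := by
    intro u hu
    rw [hg, toep_eq_toepAux]
    exact (hasDerivAt_toepAux μ hs 0 hf hM hu).differentiableAt.differentiableWithinAt
  -- the pointwise bound for `g`
  have hgu : ∀ u ∈ ball (0 : ℂ) 1, ‖g u‖ ≤ C1 ^ (1 / q) * (1 - ‖u‖ ^ 2) ^ (-τ) * W.toReal := by
    intro u hu
    have hδu := delta_pos hu
    have hu1 : ‖u‖ < 1 := mem_ball_zero_iff.1 hu
    have hsub : ball u (1 / 2 * (1 - ‖u‖)) ⊆ ball (0 : ℂ) 1 := by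
      intro v hv
      refine (delta_comp hu ?_).1
      rw [mem_ball] at hv; linarith
    have h1 := (H g hgd u hu).trans (mul_le_mul_right (lintegral_mono_set hsub) _)
    have hWq : W ^ q = ∫⁻ z in ball 0 1, ‖g z‖ₑ ^ q * ENNReal.ofReal (stdW b z) ∂dA := by
      rw [hW, wnorm_eq hq0, ← ENNReal.rpow_mul, one_div_mul_cancel hq0.ne', ENNReal.rpow_one]
    rw [← hWq, ← ENNReal.ofReal_toReal hWt, ENNReal.ofReal_rpow_of_nonneg ENNReal.toReal_nonneg
      hq0.le, ← ofReal_norm, ENNReal.ofReal_rpow_of_nonneg (norm_nonneg _) hq0.le,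
      ← ENNReal.ofReal_mul (by positivity), ← ENNReal.ofReal_mul hC1.le,
      ENNReal.ofReal_le_ofReal_iff (by positivity)] at h1
    have h2 := Real.rpow_le_rpow (by positivity) h1 (z := 1 / q) (by positivity)
    rw [Real.mul_rpow (by positivity) (by positivity), Real.mul_rpow hC1.le (by positivity),
      ← Real.rpow_mul (norm_nonneg _), ← Real.rpow_mul ENNReal.toReal_nonneg,
      ← Real.rpow_mul hδu.le, mul_one_div_cancel hq0.ne', Real.rpow_one, Real.rpow_one,
      mul_one_div, ← hτ] at h2
    rw [Real.rpow_neg hδu.le]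
    have h3 : 0 < (1 - ‖u‖ ^ 2) ^ τ := by positivity
    rw [mul_right_comm, ← div_eq_mul_inv, le_div_iff₀ h3]
    exact h2
  set ρ := (1 - ‖z‖) / 2 with hρ
  have hρ0 : 0 < ρ := by rw [hρ]; linarith
  have hcl : closure (ball z ρ) ⊆ ball (0 : ℂ) 1 := fun v hv =>
    (delta_comp hz (mem_closedBall.1 (closure_ball_subset_closedBall hv))).1
  have hcauchy := norm_iteratedDeriv_le_of_forall_mem_sphere_norm_le (c := z) (f := g)
    (C := C1 ^ (1 / q) * (4 ^ |-τ| * (1 - ‖z‖ ^ 2) ^ (-τ)) * W.toReal) k hρ0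
    (hgd.mono hcl).diffContOnCl (by
      intro u hu
      obtain ⟨hu1, hu2, hu3⟩ := delta_comp hz (mem_sphere.1 hu).le
      refine (hgu u hu1).trans ?_
      gcongr
      exact rpow_comp (delta_pos hu1) hδ hu2 hu3 _)
  rw [hg, toep_eq_toepAux, iteratedDeriv_toepAux μ hs hf hM k z hz, norm_mul, norm_real] at hcauchy
  have hprod : 1 ≤ ∏ i ∈ Finset.range k, (2 + b + i) := by
    refine Finset.prod_induction _ (fun x => (1 : ℝ) ≤ x)
      (fun _ _ => one_le_mul_of_one_le_of_one_le) le_rfl fun i _ => ?_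
    have : (0 : ℝ) ≤ i := by positivity
    linarith
  rw [Real.norm_of_nonneg (by linarith)] at hcauchy
  have hmain : ‖toepAux μ (2 + b + k) k f z‖ ≤ k.factorial * (C1 ^ (1 / q) * 4 ^ |-τ|) * 4 ^ k *
      (1 - ‖z‖ ^ 2) ^ (-(k + τ)) * W.toReal := by
    refine (le_mul_of_one_le_left (norm_nonneg _) hprod).trans (hcauchy.trans ?_)
    have hρδ : (1 - ‖z‖ ^ 2) / 4 ≤ ρ := by rw [hρ]; nlinarith [norm_nonneg z]
    calc _ ≤ (k.factorial : ℝ) *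
          (C1 ^ (1 / q) * (4 ^ |-τ| * (1 - ‖z‖ ^ 2) ^ (-τ)) * W.toReal) /
            ((1 - ‖z‖ ^ 2) / 4) ^ k := by gcongr
      _ = _ := by
        rw [neg_add, Real.rpow_add hδ, Real.rpow_neg hδ.le k, Real.rpow_natCast, div_pow]
        field_simp
  rw [← ofReal_norm, ← ENNReal.ofReal_toReal hWt, ← ENNReal.ofReal_mul (by positivity)]
  exact ENNReal.ofReal_le_ofReal hmain

/-- A function holomorphic on a disk larger than the unit disk is a uniform limit of
polynomials on the unit disk. -/
lemma exists_polynomial_tendsto {g : ℂ → ℂ} {R : ℝ≥0} (hR : 1 < R)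
    (hg : DifferentiableOn ℂ g (closedBall 0 R)) :
    ∃ P : ℕ → Polynomial ℂ,
      TendstoUniformlyOn (fun n w => (P n).eval w) g atTop (ball 0 1) := by
  have h := (hg.hasFPowerSeriesOnBall (zero_lt_one.trans hR)).tendstoUniformlyOn (r' := 1)
    (by exact_mod_cast hR)
  refine ⟨fun n => ∑ i ∈ Finset.range n,
    Polynomial.monomial i ((cauchyPowerSeries g 0 R).coeff i), ?_⟩
  convert h using 1
  · funext n w
    rw [Polynomial.eval_finsetSum, FormalMultilinearSeries.partialSum]
    refine Finset.sum_congr rfl fun i _ => ?_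
    rw [FormalMultilinearSeries.apply_eq_pow_smul_coeff, Polynomial.eval_monomial, smul_eq_mul,
      mul_comm]
  · simp
  · simp

/-- An estimate for polynomials extends to functions holomorphic on a larger disk. -/
lemma toepAux_le_of_polynomial {p a s : ℝ} (hp0 : 0 < p) (ha : -1 < a) (hs : 0 ≤ s)
    (μ : Measure ℂ) [IsFiniteMeasure μ] (k : ℕ) {K : ℝ≥0∞} (hK : K ≠ ⊤) {z : ℂ}
    (hz : z ∈ ball (0 : ℂ) 1)
    (H : ∀ P : Polynomial ℂ,
      ‖toepAux μ s k (fun w => P.eval w) z‖ₑ ≤ K * wnorm p a fun w => P.eval w)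
    {g : ℂ → ℂ} {R : ℝ≥0} (hR : 1 < R) (hg : DifferentiableOn ℂ g (closedBall 0 R)) :
    ‖toepAux μ s k g z‖ₑ ≤ K * wnorm p a g := by
  obtain ⟨P, hP⟩ := exists_polynomial_tendsto hR hg
  obtain ⟨M, hM⟩ := (isCompact_closedBall (0 : ℂ) R).exists_bound_of_continuousOn hg.continuousOn
  have hR' : (1 : ℝ) ≤ R := by exact_mod_cast hR.le
  have hM' : ∀ w ∈ ball (0 : ℂ) 1, ‖g w‖ ≤ M := fun w hw =>
    hM w (closedBall_subset_closedBall hR' (ball_subset_closedBall hw))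
  have hM0 : 0 ≤ M := (norm_nonneg _).trans (hM' 0 (by simp))
  have hPM : ∀ᶠ n in atTop, ∀ w ∈ ball (0 : ℂ) 1, ‖(P n).eval w‖ ≤ M + 1 := by
    filter_upwards [Metric.tendstoUniformlyOn_iff.1 hP 1 one_pos] with n hn w hw
    have h1 := hn w hw
    rw [dist_eq_norm] at h1
    have h2 : ‖(P n).eval w‖ ≤ ‖g w‖ + ‖g w - (P n).eval w‖ := by
      simpa using norm_sub_le (g w) (g w - (P n).eval w)
    linarith [hM' w hw]
  have hpt : ∀ w ∈ ball (0 : ℂ) 1, Tendsto (fun n => (P n).eval w) atTop (𝓝 (g w)) :=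
    fun w hw => hP.tendsto_at hw
  have h1 : Tendsto (fun n => toepAux μ s k (fun w => (P n).eval w) z) atTop
      (𝓝 (toepAux μ s k g z)) := by
    refine tendsto_integral_filter_of_dominated_convergence
      (fun _ => (M + 1) * (1 - ‖z‖) ^ (-s)) ?_ ?_ (integrable_const _) ?_
    · exact Eventually.of_forall fun n =>
        (measurable_toepAux_integrand s k (P n).continuous.measurable z).aestronglyMeasurable
    · filter_upwards [hPM] with n hn
      filter_upwards [ae_restrict_mem measurableSet_ball] with w hw
      exact norm_toepAux_integrand_le hs k (mem_ball_zero_iff.1 hz) hn le_rfl hw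
    · filter_upwards [ae_restrict_mem measurableSet_ball] with w hw
      exact ((hpt w hw).mul_const _).mul_const _
  have h2 : Tendsto (fun n => wnorm p a fun w => (P n).eval w) atTop (𝓝 (wnorm p a g)) := by
    simp only [wnorm_eq hp0]
    refine (ENNReal.continuous_rpow_const.tendsto _).comp ?_
    refine tendsto_lintegral_filter_of_dominated_convergence
      (fun w => ENNReal.ofReal (M + 1) ^ p * ENNReal.ofReal (stdW a w)) ?_ ?_ ?_ ?_
    · refine Eventually.of_forall fun n => ?_
      have := (P n).continuous.measurable
      have := measurable_stdW a
      fun_prop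
    · filter_upwards [hPM] with n hn
      filter_upwards [ae_restrict_mem measurableSet_ball] with w hw
      rw [← ofReal_norm]
      gcongr
      exact hn w hw
    · rw [lintegral_const_mul' _ _ (by finiteness)]
      exact ENNReal.mul_ne_top (by finiteness) (lintegral_stdW_lt_top ha).ne
    · filter_upwards [ae_restrict_mem measurableSet_ball] with w hw
      refine ENNReal.Tendsto.mul_const ?_ (Or.inr ENNReal.ofReal_ne_top)
      exact (ENNReal.continuous_rpow_const.tendsto _).comp (hpt w hw).enorm
  exact le_of_tendsto_of_tendsto' h1.enorm (ENNReal.Tendsto.const_mul h2 (Or.inr hK))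
    fun n => H (P n)

/-- The test functions `w ↦ wᵏ (1 - z̄ w)^(-m)`, with the principal branch of the power; its base
has positive real part for `z`, `w` in the unit disk. -/
noncomputable def testFun (z : ℂ) (k : ℕ) (m : ℝ) (w : ℂ) : ℂ :=
  w ^ k * (1 - w * (starRingEnd ℂ) z) ^ ((-m : ℝ) : ℂ)

lemma testFun_differentiableOn {z : ℂ} (hz : z ∈ ball (0 : ℂ) 1) (k : ℕ) (m : ℝ) :
    ∃ R : ℝ≥0, 1 < R ∧ DifferentiableOn ℂ (testFun z k m) (closedBall 0 R) := by
  have hz1 : ‖z‖ < 1 := mem_ball_zero_iff.1 hz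
  have h0 := norm_nonneg z
  refine ⟨(2 / (1 + ‖z‖)).toNNReal, ?_, fun w hw => ?_⟩
  · rw [Real.one_lt_toNNReal, lt_div_iff₀ (by positivity)]; linarith
  · rw [mem_closedBall_zero_iff, Real.coe_toNNReal _ (by positivity)] at hw
    have h1 : ‖w * (starRingEnd ℂ) z‖ < 1 := by
      rw [norm_mul, RCLike.norm_conj]
      refine (mul_le_mul_of_nonneg_right hw h0).trans_lt ?_
      rw [div_mul_eq_mul_div, div_lt_one (by positivity)]; linarith
    have h2 : 1 - w * (starRingEnd ℂ) z ∈ slitPlane := by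
      left
      have := re_le_norm (w * (starRingEnd ℂ) z)
      simp only [sub_re, one_re]
      linarith
    have h3 : DifferentiableAt ℂ (fun w : ℂ => 1 - w * (starRingEnd ℂ) z) w := by fun_prop
    exact ((differentiableAt_id.pow k).mul (h3.cpow_const h2)).differentiableWithinAt

lemma norm_testFun (z : ℂ) (k : ℕ) (m : ℝ) (w : ℂ) :
    ‖testFun z k m w‖ = ‖w‖ ^ k * ‖1 - (starRingEnd ℂ) z * w‖ ^ (-m) := by
  rw [testFun, norm_mul, norm_pow, norm_cpow_real, mul_comm w]

lemma wnorm_testFun_le {p a m : ℝ} (hp0 : 0 < p) (ha : -1 < a) (hm : a + 2 < p * m) (k : ℕ) :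
    ∃ C : ℝ, 0 < C ∧ ∀ z ∈ ball (0 : ℂ) 1,
      wnorm p a (testFun z k m) ≤ ENNReal.ofReal (C * (1 - ‖z‖ ^ 2) ^ ((a + 2) / p - m)) := by
  obtain ⟨C, hC, H⟩ := forelli_rudin ha hm
  refine ⟨C ^ (1 / p), by positivity, fun z hz => ?_⟩
  have hδ := delta_pos hz
  have h1 : ∫⁻ w in ball (0 : ℂ) 1, ‖testFun z k m w‖ₑ ^ p * ENNReal.ofReal (stdW a w) ∂dA ≤
      ENNReal.ofReal (C * (1 - ‖z‖ ^ 2) ^ (a + 2 - p * m)) := by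
    refine (setLIntegral_mono' measurableSet_ball fun w hw => ?_).trans (H z hz)
    rw [ENNReal.ofReal_mul (by positivity), ← ofReal_norm,
      ENNReal.ofReal_rpow_of_nonneg (norm_nonneg _) hp0.le, norm_testFun,
      show -(p * m) = -m * p by ring, Real.rpow_mul (norm_nonneg _)]
    gcongr
    exact mul_le_of_le_one_left (by positivity)
      (pow_le_one₀ (norm_nonneg _) (mem_ball_zero_iff.1 hw).le)
  rw [wnorm_eq hp0]
  refine (ENNReal.rpow_le_rpow h1 (by positivity)).trans (le_of_eq ?_)
  rw [ENNReal.ofReal_rpow_of_nonneg (by positivity) (by positivity),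
    Real.mul_rpow hC.le (by positivity), ← Real.rpow_mul hδ.le]
  congr 3
  field_simp

/-- On `D(z,1/4)` the kernel is comparable to `1 - |z|²`, and `w` stays away from the zero of the
factor `wᵏ` of the test function. -/
lemma pD_estimates {z w : ℂ} (hz : z ∈ ball (0 : ℂ) 1) (hz2 : 1 / 2 ≤ ‖z‖)
    (hw : w ∈ pD z (1 / 4)) :
    0 < ‖1 - (starRingEnd ℂ) z * w‖ ∧
      ‖1 - (starRingEnd ℂ) z * w‖ ≤ 4 / 3 * (1 - ‖z‖ ^ 2) ∧ 1 / 4 ≤ ‖w‖ := by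
  obtain ⟨hw1, hw2⟩ := hw
  have hz1 : ‖z‖ < 1 := mem_ball_zero_iff.1 hz
  have hpos : 0 < ‖1 - (starRingEnd ℂ) z * w‖ := by
    have := le_norm_one_sub hw1 hz
    rw [mul_comm w] at this
    linarith [mem_ball_zero_iff.1 hw1]
  rw [norm_div, div_lt_iff₀ hpos] at hw2
  have h1 : ‖1 - (starRingEnd ℂ) z * w‖ ≤ (1 - ‖z‖ ^ 2) + ‖z - w‖ := by
    have e : 1 - (starRingEnd ℂ) z * w =
        ((1 - ‖z‖ ^ 2 : ℝ) : ℂ) + (starRingEnd ℂ) z * (z - w) := by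
      push_cast
      rw [mul_sub, conj_mul']
      ring
    rw [e]
    refine (norm_add_le _ _).trans (add_le_add (le_of_eq ?_) ?_)
    · rw [norm_real, Real.norm_of_nonneg (delta_pos hz).le]
    · rw [norm_mul, RCLike.norm_conj]
      exact mul_le_of_le_one_left (norm_nonneg _) hz1.le
  have h2 : ‖z‖ ≤ ‖w‖ + ‖z - w‖ := by simpa using norm_add_le w (z - w)
  refine ⟨hpos, by linarith, ?_⟩
  nlinarith

/-- For the test function the integrand is `|w|^(2k) |1 - z̄ w|^(-2m)`, which is bounded below on
`D(z,1/4)`. -/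
lemma toepAux_testFun_ge {m : ℝ} (hm : 0 ≤ m) (k : ℕ) (μ : Measure ℂ) [IsFiniteMeasure μ]
    {z : ℂ} (hz : z ∈ ball (0 : ℂ) 1) (hz2 : 1 / 2 ≤ ‖z‖) :
    ENNReal.ofReal (((1 / 4) ^ k * (4 / 3 * (1 - ‖z‖ ^ 2)) ^ (-m)) ^ 2) * μ (pD z (1 / 4)) ≤
      ‖toepAux μ m k (testFun z k m) z‖ₑ := by
  have hδ := delta_pos hz
  have hz1 : ‖z‖ < 1 := mem_ball_zero_iff.1 hz
  set F : ℂ → ℝ := fun w => (‖w‖ ^ k * ‖1 - (starRingEnd ℂ) z * w‖ ^ (-m)) ^ 2 with hF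
  have hFm : Measurable F := by
    have : Continuous fun w : ℂ => ‖1 - (starRingEnd ℂ) z * w‖ := by fun_prop
    have := this.measurable
    fun_prop
  have hFi : Integrable F (μ.restrict (ball 0 1)) := by
    refine Integrable.of_bound hFm.aestronglyMeasurable ((1 - ‖z‖) ^ (-m) * (1 - ‖z‖) ^ (-m)) ?_
    filter_upwards [ae_restrict_mem measurableSet_ball] with w hw
    have h1 := le_norm_one_sub hz hw
    have h2 : ‖1 - z * (starRingEnd ℂ) w‖ = ‖1 - (starRingEnd ℂ) z * w‖ := by
      rw [← RCLike.norm_conj (1 - (starRingEnd ℂ) z * w)]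
      simp
    rw [h2] at h1
    have h3 : ‖w‖ ^ k * ‖1 - (starRingEnd ℂ) z * w‖ ^ (-m) ≤ 1 * (1 - ‖z‖) ^ (-m) := by
      refine mul_le_mul (pow_le_one₀ (norm_nonneg _) (mem_ball_zero_iff.1 hw).le) ?_
        (by positivity) zero_le_one
      exact Real.rpow_le_rpow_of_nonpos (by linarith) h1 (by linarith)
    rw [one_mul] at h3
    rw [Real.norm_of_nonneg (by positivity), hF]
    simp only
    rw [sq]
    exact mul_le_mul h3 h3 (by positivity) ((by positivity : (0 : ℝ) ≤ _).trans h3)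
  have hint : toepAux μ m k (testFun z k m) z =
      ((∫ w in ball (0 : ℂ) 1, F w ∂μ : ℝ) : ℂ) := by
    rw [← integral_complex_ofReal, toepAux]
    refine setIntegral_congr_fun measurableSet_ball fun w hw => ?_
    have harg : (1 - w * (starRingEnd ℂ) z).arg ≠ Real.pi :=
      (mem_slitPlane_iff_arg.1 (one_sub_mem_slitPlane hw hz)).1
    have hconj : (1 - z * (starRingEnd ℂ) w) ^ ((-m : ℝ) : ℂ) =
        (starRingEnd ℂ) ((1 - w * (starRingEnd ℂ) z) ^ ((-m : ℝ) : ℂ)) := by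
      have := conj_cpow (1 - w * (starRingEnd ℂ) z) ((-m : ℝ) : ℂ) harg
      rw [conj_ofReal] at this
      rw [← this]
      simp [mul_comm]
    simp only [hF]
    rw [← norm_testFun, ofReal_pow, ← mul_conj', hconj, testFun, map_mul, map_pow]
    ring
  rw [hint, ← ofReal_norm, norm_real, Real.norm_of_nonneg (integral_nonneg fun w => sq_nonneg _),
    ofReal_integral_eq_lintegral_ofReal hFi (Eventually.of_forall fun w => sq_nonneg _),
    ← setLIntegral_const]
  have hsub : pD z (1 / 4) ⊆ ball 0 1 := fun w hw => hw.1
  refine le_trans ?_ (lintegral_mono_set hsub)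
  refine setLIntegral_mono hFm.ennreal_ofReal fun w hw => ENNReal.ofReal_le_ofReal ?_
  obtain ⟨h1, h2, h3⟩ := pD_estimates hz hz2 hw
  simp only [hF]
  gcongr ((?_ ^ k) * ?_) ^ 2
  exact Real.rpow_le_rpow_of_nonpos h1 h2 (by linarith)

lemma carleson_of_bounded {p q q' a b : ℝ} (hp0 : 0 < p) (hq : 1 < q)
    (hq' : 1 / q + 1 / q' = 1) (hq'0 : 0 < q') (hb : -1 < b) (ha : -1 < a)
    (μ : Measure ℂ) [IsFiniteMeasure μ] {K : ℝ≥0}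
    (H : ∀ P : Polynomial ℂ,
      wnorm q b (Toep μ b fun z => P.eval z) ≤ K * wnorm p a fun z => P.eval z) :
    ∃ C : ℝ, ∀ z ∈ ball (0 : ℂ) 1, μ (pD z (1 / 4)) ≤
      ENNReal.ofReal (C * (1 - ‖z‖ ^ 2) ^ ((a + 2) / p + (b + 2) / q')) := by
  -- `k` is chosen so large that the Forelli–Rudin estimate applies to the test functions
  obtain ⟨k, hk⟩ := exists_nat_gt ((a + 2) / p)
  set m := 2 + b + k with hm
  have hk0 : (0 : ℝ) ≤ k := by positivity
  have hm0 : 0 ≤ m := by linarith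
  have hpm : a + 2 < p * m := by
    rw [div_lt_iff₀ hp0] at hk
    nlinarith
  obtain ⟨C1, hC1, H1⟩ := enorm_toepAux_le (q := q) (by linarith) hb μ k
  obtain ⟨C2, hC2, H2⟩ := wnorm_testFun_le hp0 ha hpm k
  set σ := (a + 2) / p + (b + 2) / q' with hσ
  have hσ0 : 0 < σ := add_pos (div_pos (by linarith) hp0) (div_pos (by linarith) hq'0)
  set c : ℝ := ((1 / 4) ^ k * (4 / 3) ^ (-m)) ^ 2 with hc
  have hc0 : 0 < c := by positivity
  refine ⟨max (C1 * K * C2 / c) (μ.real univ * (4 / 3) ^ σ), fun z hz => ?_⟩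
  have hδ := delta_pos hz
  rw [← ofReal_measureReal]
  refine ENNReal.ofReal_le_ofReal ?_
  rcases le_or_gt (1 / 2) ‖z‖ with hz2 | hz2
  · refine le_trans ?_ (mul_le_mul_of_nonneg_right (le_max_left _ _) (by positivity))
    have hpoly : ∀ P : Polynomial ℂ, ‖toepAux μ m k (fun w => P.eval w) z‖ₑ ≤
        ENNReal.ofReal (C1 * (1 - ‖z‖ ^ 2) ^ (-(k + (b + 2) / q))) * K *
          wnorm p a fun w => P.eval w := by
      intro P
      obtain ⟨M, hM⟩ := (isCompact_closedBall (0 : ℂ) 1).exists_bound_of_continuousOn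
        P.continuous.continuousOn
      rw [mul_assoc]
      exact (H1 _ P.continuous.measurable ⟨M, fun w hw => hM w (ball_subset_closedBall hw)⟩
        z hz).trans (mul_le_mul_right (H P) _)
    obtain ⟨R, hR, hd⟩ := testFun_differentiableOn hz k m
    have h1 := (toepAux_testFun_ge hm0 k μ hz hz2).trans <|
      (toepAux_le_of_polynomial hp0 ha hm0 μ k (by finiteness) hz hpoly hR hd).trans
        (mul_le_mul_right (H2 z hz) _)
    rw [← ofReal_measureReal, ← ENNReal.ofReal_coe_nnreal, ← ENNReal.ofReal_mul (by positivity),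
      ← ENNReal.ofReal_mul (by positivity), ← ENNReal.ofReal_mul (by positivity),
      ENNReal.ofReal_le_ofReal_iff (by positivity), Real.mul_rpow (by norm_num) hδ.le] at h1
    have hexp : (1 - ‖z‖ ^ 2) ^ (-(k + (b + 2) / q)) * (1 - ‖z‖ ^ 2) ^ ((a + 2) / p - m) =
        ((1 - ‖z‖ ^ 2) ^ (-m)) ^ 2 * (1 - ‖z‖ ^ 2) ^ σ := by
      rw [sq ((1 - ‖z‖ ^ 2) ^ (-m)), ← Real.rpow_add hδ, ← Real.rpow_add hδ, ← Real.rpow_add hδ]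
      congr 1
      have : (b + 2) / q = (b + 2) - (b + 2) / q' := by
        linear_combination (b + 2) * hq'
      rw [this, hσ, hm]
      ring
    have h2 : 0 < ((1 - ‖z‖ ^ 2) ^ (-m)) ^ 2 := by positivity
    rw [div_mul_eq_mul_div, le_div_iff₀ hc0]
    refine le_of_mul_le_mul_left ?_ h2
    calc _ = ((1 / 4) ^ k * ((4 / 3) ^ (-m) * (1 - ‖z‖ ^ 2) ^ (-m))) ^ 2 *
          μ.real (pD z (1 / 4)) := by rw [hc]; ring
      _ ≤ _ := h1
      _ = C1 * K * C2 * ((1 - ‖z‖ ^ 2) ^ (-(k + (b + 2) / q)) *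
          (1 - ‖z‖ ^ 2) ^ ((a + 2) / p - m)) := by ring
      _ = _ := by rw [hexp]; ring
  -- for `|z| < 1/2` finiteness of `μ` suffices, since `1 - |z|² ≥ 3/4`
  · refine le_trans ?_ (mul_le_mul_of_nonneg_right (le_max_right _ _) (by positivity))
    rw [mul_assoc, ← Real.mul_rpow (by norm_num) hδ.le]
    refine (measureReal_mono (subset_univ _)).trans (le_mul_of_one_le_right (by positivity) ?_)
    exact Real.one_le_rpow (by nlinarith [norm_nonneg z]) hσ0.le

theorem stmt6 (p q q' a b : ℝ) (hp0 : 0 < p) (hp1 : p ≤ 1) (hq : 1 < q)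
    (hq' : 1 / q + 1 / q' = 1) (hb : -1 < b) (hba : b ≤ a)
    (μ : Measure ℂ) [IsFiniteMeasure μ] :
    (∃ C : ℝ≥0, ∀ P : Polynomial ℂ,
        wnorm q b (Toep μ b fun z => P.eval z) ≤ C * wnorm p a fun z => P.eval z) ↔
      ∃ r ∈ Set.Ioo (0 : ℝ) 1, ∃ C : ℝ, ∀ z ∈ ball (0 : ℂ) 1,
        μ (pD z r) ≤
          ENNReal.ofReal
            (C * (1 - ‖z‖ ^ 2) ^ ((a + 2) * (1 / p + ((b + 2) / (a + 2)) / q'))) := by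
  have ha : -1 < a := by linarith
  have hq'0 : 0 < q' :=
    (Real.holderConjugate_iff.2 ⟨hq, by simpa using hq'⟩ : q.HolderConjugate q').symm.pos
  have hexp : (a + 2) * (1 / p + ((b + 2) / (a + 2)) / q') = (a + 2) / p + (b + 2) / q' := by
    have : a + 2 ≠ 0 := by linarith
    field_simp
  rw [hexp]
  constructor
  · rintro ⟨K, H⟩
    exact ⟨1 / 4, by norm_num, carleson_of_bounded hp0 hq hq' hq'0 hb ha μ H⟩
  · rintro ⟨r, hr, C, H⟩
    exact bounded_of_carleson hp0 hp1 hq hq' hb ha μ hr.1 hr.2 H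
end

section
/- Let $0<p\le 1$, $-1<\alpha<\infty$, and $\eta=(2+\alpha-p)/p$. Suppose $\mu$ is a positive Borel measure on $\mathbb{D}$ that is a $(1/p)$-Carleson measure for $L^1_a(\omega_\alpha)$. Then for all $z\in\mathbb{D}$, $(1-|z|^2)\log\frac{2}{1-|z|^2}\,\Big|\int_{\mathbb{D}}\frac{d\mu(u)}{(1-u\bar z)^{\eta+1}}\Big|\le C$, i.e. the quantity $(1-|z|^2)\log\frac{2}{1-|z|^2}|T_{\mu,\eta-1}(1)(z)|$ is uniformly bounded. -/
/-!
Put `s = (a + 2) / p > 1`; the exponent of the Toeplitz kernel is exactly `s`, so it suffices to show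
that `∫ |1 - z ū|^(-s) dμ(u) ≤ K (1 - |z|)^(ε - 1)` for some `ε ∈ (0, 1)`: the factor
`(1 - |z|)^ε` left over absorbs the logarithm.

Comparison with area measure (`lintegral_carleson_le`): the Euclidean disk `B(v, r (1 - |v|))` lies in
the pseudohyperbolic disk `D(v, r)`, so its `μ`-measure is at most `C (1 - |v|)^s`. The kernel value
at `u` is dominated by an average over the `v` with `|u - v| < r (1 - |v|)` (`kernel_le_average`),
and Tonelli's theorem turns the `μ`-integral into
`∫ |1 - z v̄|^(-s) (1 - |v|)^(s - 2) dA(v)`, up to a constant.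

Area estimate (`lintegral_area_bound`): writing `A = |1 - z v̄|` and `B = 1 - |v|`, so that `B ≤ A` and
`1 - |z| ≤ A`, Young's inequality gives `A^(-s) B^(s-2) ≤ (1 - |z|)^(ε-1) (A^(-γ) + B^(-β))` with
`γ < 2` and `β < 1` (`kernel_young`). Both powers on the right are integrable over the disk,
uniformly in `z`.
-/

open MeasureTheory Metric Filter Complex Set
open scoped ENNReal NNReal Topology

/-! ### The area integral of the kernel -/

/-- Pointwise bound of the kernel by two separately integrable powers. In the application
`A = |1 - z v̄|`, `B = 1 - |v|` and `δ = 1 - |z|`. -/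
lemma kernel_young {s : ℝ} (hs : 1 < s) :
    ∃ ε β γ : ℝ, 0 < ε ∧ ε < 1 ∧ β < 1 ∧ 0 < γ ∧ γ < 2 ∧
      ∀ A B δ : ℝ, 0 < B → B ≤ A → 0 < δ → δ ≤ A →
        A ^ (-s) * B ^ (s - 2) ≤ δ ^ (ε - 1) * (A ^ (-γ) + B ^ (-β)) := by
  -- `B ≤ A` lets `s` be lowered, so it suffices to treat an exponent `t ∈ (1, 3/2]`.
  obtain ⟨t, ht1, ht2, hts⟩ : ∃ t : ℝ, 1 < t ∧ t ≤ 3 / 2 ∧ t ≤ s :=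
    ⟨min s (3 / 2), lt_min hs (by norm_num), min_le_right _ _, min_le_left _ _⟩
  -- Any `θ` slightly above `2 - t` makes `β = (2 - t) / θ < 1` and leaves `γ` below `2`.
  obtain ⟨θ, hθ⟩ : ∃ θ : ℝ, θ = (2 - t) + (t - 1) / 4 := ⟨_, rfl⟩
  have hθ0 : 0 < θ := by linarith
  refine ⟨(t - 1) / 4, (2 - t) / θ, 5 / 3, by linarith, by linarith, ?_, by norm_num,
    by norm_num, ?_⟩
  · rw [div_lt_one hθ0]; linarith
  intro A B δ hB hBA hδ hδA
  have hA : 0 < A := hB.trans_le hBA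
  have h1 : A ^ (-s) * B ^ (s - 2) ≤ A ^ (-t) * B ^ (t - 2) := by
    have e1 : A ^ (-s) = A ^ (-t) * A ^ (-(s - t)) := by
      rw [← Real.rpow_add hA]; congr 1; ring
    have e2 : B ^ (s - 2) = B ^ (t - 2) * B ^ (s - t) := by
      rw [← Real.rpow_add hB]; congr 1; ring
    have e3 : A ^ (-(s - t)) * B ^ (s - t) ≤ 1 := by
      rw [Real.rpow_neg hA.le, inv_mul_le_iff₀ (by positivity), mul_one]
      exact Real.rpow_le_rpow hB.le hBA (by linarith)
    calc A ^ (-s) * B ^ (s - 2) = (A ^ (-t) * B ^ (t - 2)) * (A ^ (-(s - t)) * B ^ (s - t)) := by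
          rw [e1, e2]; ring
      _ ≤ (A ^ (-t) * B ^ (t - 2)) * 1 := by gcongr
      _ = _ := mul_one _
  have h2 : A ^ (-t) = A ^ ((t - 1) / 4 - 1) * A ^ (-(5 / 4 * (t - 1))) := by
    rw [← Real.rpow_add hA]; congr 1; ring
  have h3 : A ^ ((t - 1) / 4 - 1) ≤ δ ^ ((t - 1) / 4 - 1) :=
    Real.rpow_le_rpow_of_nonpos hδ hδA (by linarith)
  have h4 : A ^ (-(5 / 4 * (t - 1))) * B ^ (t - 2) ≤ A ^ (-(5 / 3) : ℝ) + B ^ (-((2 - t) / θ)) := by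
    have := Real.geom_mean_le_arith_mean2_weighted (w₁ := 1 - θ) (w₂ := θ)
      (p₁ := A ^ (-(5 / 3) : ℝ)) (p₂ := B ^ (-((2 - t) / θ))) (by linarith) hθ0.le
      (by positivity) (by positivity) (by ring)
    rw [← Real.rpow_mul hA.le, ← Real.rpow_mul hB.le] at this
    have e1 : -(5 / 3 : ℝ) * (1 - θ) = -(5 / 4 * (t - 1)) := by rw [hθ]; ring
    have e2 : -((2 - t) / θ) * θ = t - 2 := by field_simp; ring
    rw [e1, e2] at this
    refine this.trans (add_le_add ?_ ?_)
    · exact mul_le_of_le_one_left (by positivity) (by linarith)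
    · exact mul_le_of_le_one_left (by positivity) (by linarith)
  calc _ ≤ _ := h1
    _ = A ^ ((t - 1) / 4 - 1) * (A ^ (-(5 / 4 * (t - 1))) * B ^ (t - 2)) := by rw [h2]; ring
    _ ≤ _ := by gcongr

lemma lintegral_one_sub_norm {β : ℝ} (hβ : β < 1) :
    ∫⁻ v in ball (0 : ℂ) 1, ENNReal.ofReal ((1 - ‖v‖) ^ (-β)) < ⊤ := by
  refine IntegrableOn.setLIntegral_lt_top ?_
  rw [← integrable_indicator_iff measurableSet_ball]
  have h1 : (ball (0 : ℂ) 1).indicator (fun v => (1 - ‖v‖) ^ (-β)) =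
      fun v : ℂ => (Iio (1 : ℝ)).indicator (fun y => (1 - y) ^ (-β)) ‖v‖ := by
    ext v; simp [indicator]
  rw [h1, integrable_fun_norm_addHaar, Complex.finrank_real_complex]
  have h2 : IntegrableOn (fun y : ℝ => (1 - y) ^ (-β)) (Ioo 0 1) := by
    have := (intervalIntegral.intervalIntegrable_rpow' (a := 1) (b := 0) (r := -β)
      (by linarith)).comp_sub_left 1
    simp only [sub_self, sub_zero] at this
    rw [intervalIntegrable_iff_integrableOn_Ioc_of_le zero_le_one] at this
    exact this.mono_set Ioo_subset_Ioc_self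
  have h3 : IntegrableOn (fun y : ℝ => y * (1 - y) ^ (-β)) (Ioo 0 1) := by
    refine Integrable.mono' h2 (by fun_prop) ?_
    refine (ae_restrict_iff' measurableSet_Ioo).2 (ae_of_all _ fun y hy => ?_)
    have : 0 ≤ (1 - y) ^ (-β) := Real.rpow_nonneg (by linarith [hy.2]) _
    rw [norm_mul, Real.norm_of_nonneg this, Real.norm_of_nonneg hy.1.le]
    exact mul_le_of_le_one_left this hy.2.le
  have h4 : (fun y : ℝ => y ^ (2 - 1) • (Iio (1 : ℝ)).indicator (fun y => (1 - y) ^ (-β)) y) =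
      (Iio 1).indicator (fun y : ℝ => y * (1 - y) ^ (-β)) := by
    ext y; simp [indicator]
  rw [h4, IntegrableOn, integrable_indicator_iff measurableSet_Iio, IntegrableOn,
    Measure.restrict_restrict measurableSet_Iio, inter_comm, Ioi_inter_Iio]
  exact h3

lemma lintegral_norm_rpow {γ : ℝ} (hγ : γ < 2) :
    ∫⁻ v in ball (0 : ℂ) 3, ENNReal.ofReal (‖v‖ ^ (-γ)) < ⊤ := by
  refine IntegrableOn.setLIntegral_lt_top ?_
  rw [← integrable_indicator_iff measurableSet_ball]
  have h1 : (ball (0 : ℂ) 3).indicator (fun v => ‖v‖ ^ (-γ)) =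
      fun v : ℂ => (Iio (3 : ℝ)).indicator (fun y => y ^ (-γ)) ‖v‖ := by
    ext v; simp [indicator]
  rw [h1, integrable_fun_norm_addHaar, Complex.finrank_real_complex]
  have h3 : IntegrableOn (fun y : ℝ => y ^ (1 - γ)) (Ioo 0 3) := by
    have := intervalIntegral.intervalIntegrable_rpow' (a := 0) (b := 3) (r := 1 - γ)
      (by linarith)
    rw [intervalIntegrable_iff_integrableOn_Ioc_of_le (by norm_num)] at this
    exact this.mono_set Ioo_subset_Ioc_self
  have h4 : (fun y : ℝ => y ^ (2 - 1) • (Iio (3 : ℝ)).indicator (fun y => y ^ (-γ)) y) =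
      (Iio 3).indicator (fun y : ℝ => y * y ^ (-γ)) := by
    ext y; simp [indicator]
  rw [h4, IntegrableOn, integrable_indicator_iff measurableSet_Iio, IntegrableOn,
    Measure.restrict_restrict measurableSet_Iio, inter_comm, Ioi_inter_Iio]
  refine (integrableOn_congr_fun (fun y hy => ?_) measurableSet_Ioo).1 h3
  rw [sub_eq_add_neg, Real.rpow_add hy.1, Real.rpow_one]

lemma one_sub_norm_le {z v : ℂ} (hz : ‖z‖ < 1) (hv : ‖v‖ < 1) :
    1 - ‖z‖ ≤ ‖1 - z * (starRingEnd ℂ) v‖ ∧ 1 - ‖v‖ ≤ ‖1 - z * (starRingEnd ℂ) v‖ := by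
  have h := norm_sub_norm_le (1 : ℂ) (z * (starRingEnd ℂ) v)
  rw [norm_mul, RCLike.norm_conj, norm_one] at h
  constructor <;> nlinarith [norm_nonneg z, norm_nonneg v]

/-- Uniform in `z`: the singularity `1 / z̄` stays outside the disk, and for exponents below `2` a
point singularity in the plane is integrable. -/
lemma lintegral_kernel_bounded {γ : ℝ} (hγ0 : 0 < γ) (hγ : γ < 2) :
    ∃ M : ℝ≥0∞, M < ⊤ ∧ ∀ z ∈ ball (0 : ℂ) 1,
      ∫⁻ v in ball (0 : ℂ) 1, ENNReal.ofReal (‖1 - z * (starRingEnd ℂ) v‖ ^ (-γ)) ≤ M := by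
  set I := ∫⁻ v in ball (0 : ℂ) 3, ENNReal.ofReal (‖v‖ ^ (-γ)) with hI
  have hIlt : I < ⊤ := lintegral_norm_rpow hγ
  refine ⟨ENNReal.ofReal (2 ^ γ) * (volume (ball (0 : ℂ) 1) + I),
    ENNReal.mul_lt_top ENNReal.ofReal_lt_top
      (ENNReal.add_lt_top.2 ⟨measure_ball_lt_top, hIlt⟩), ?_⟩
  intro z hz
  rw [mem_ball_zero_iff] at hz
  have half : ((1 : ℝ) / 2) ^ (-γ) = 2 ^ γ := by
    rw [Real.rpow_neg (by norm_num), ← Real.inv_rpow (by norm_num)]; norm_num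
  rcases le_total ‖z‖ (1 / 2) with h | h
  · calc _ ≤ ∫⁻ v in ball (0 : ℂ) 1, ENNReal.ofReal (2 ^ γ) := by
          refine setLIntegral_mono measurable_const fun v hv => ENNReal.ofReal_le_ofReal ?_
          rw [mem_ball_zero_iff] at hv
          have := (one_sub_norm_le hz hv).1
          rw [← half]
          exact Real.rpow_le_rpow_of_nonpos (by norm_num) (by linarith) (by linarith)
      _ = ENNReal.ofReal (2 ^ γ) * volume (ball (0 : ℂ) 1) := by simp
      _ ≤ _ := by gcongr; exact le_self_add
  · -- Here `1 - z v̄` has modulus `|z| |w - v|`, with `w = 1 / z̄` of modulus at most `2`.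
    have hz0 : z ≠ 0 := by rintro rfl; norm_num at h
    set w : ℂ := (starRingEnd ℂ) z⁻¹ with hw
    have hwn : ‖w‖ = ‖z‖⁻¹ := by rw [hw, RCLike.norm_conj, norm_inv]
    have hw1 : 1 < ‖w‖ := by rw [hwn]; exact (one_lt_inv₀ (by linarith)).2 hz
    have hw2 : ‖w‖ ≤ 2 := by
      rw [hwn]; exact inv_le_of_inv_le₀ (by norm_num) (by norm_num; linarith)
    calc _ ≤ ∫⁻ v in ball (0 : ℂ) 1, ENNReal.ofReal (2 ^ γ) *
              (ball (0 : ℂ) 3).indicator (fun v => ENNReal.ofReal (‖v‖ ^ (-γ))) (v - w) := by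
          refine setLIntegral_mono (by
            refine Measurable.const_mul
              (Measurable.comp (Measurable.indicator ?_ measurableSet_ball) ?_) _ <;> fun_prop)
            fun v hv => ?_
          rw [mem_ball_zero_iff] at hv
          have hvw : v - w ∈ ball (0 : ℂ) 3 := by
            rw [mem_ball_zero_iff]; linarith [norm_sub_le v w]
          rw [indicator_of_mem hvw, ← ENNReal.ofReal_mul (by positivity)]
          refine ENNReal.ofReal_le_ofReal ?_
          have e : ‖1 - z * (starRingEnd ℂ) v‖ = ‖z‖ * ‖v - w‖ := by
            rw [← RCLike.norm_conj (v - w), ← norm_mul, ← norm_neg, hw, map_sub,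
              Complex.conj_conj, mul_sub, mul_inv_cancel₀ hz0]
            congr 1; ring
          have hpos : 0 < ‖v - w‖ := by
            linarith [norm_sub_norm_le w v, norm_sub_rev v w]
          rw [e, ← half, Real.mul_rpow (by positivity) hpos.le]
          exact mul_le_mul_of_nonneg_right
            (Real.rpow_le_rpow_of_nonpos (by norm_num) h (by linarith)) (by positivity)
      _ ≤ ∫⁻ v, ENNReal.ofReal (2 ^ γ) *
              (ball (0 : ℂ) 3).indicator (fun v => ENNReal.ofReal (‖v‖ ^ (-γ))) (v - w) :=
          setLIntegral_le_lintegral _ _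
      _ = ENNReal.ofReal (2 ^ γ) * I := by
          rw [lintegral_const_mul' _ _ ENNReal.ofReal_ne_top,
            lintegral_sub_right_eq_self (fun v => (ball (0 : ℂ) 3).indicator
              (fun v => ENNReal.ofReal (‖v‖ ^ (-γ))) v) w,
            lintegral_indicator measurableSet_ball]
      _ ≤ _ := by gcongr; exact le_add_self

/-- The true order of growth of this integral is `log (2 / (1 - |z|))`; the power bound is weaker, but
its exponent `ε - 1 > -1` is all that is needed. -/
lemma lintegral_area_bound {s : ℝ} (hs : 1 < s) :
    ∃ ε K : ℝ, 0 < ε ∧ ε < 1 ∧ 0 ≤ K ∧ ∀ z ∈ ball (0 : ℂ) 1,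
      ∫⁻ v in ball (0 : ℂ) 1,
        ENNReal.ofReal (‖1 - z * (starRingEnd ℂ) v‖ ^ (-s) * (1 - ‖v‖) ^ (s - 2)) ≤
      ENNReal.ofReal (K * (1 - ‖z‖) ^ (ε - 1)) := by
  obtain ⟨ε, β, γ, hε0, hε1, hβ, hγ0, hγ, H⟩ := kernel_young hs
  obtain ⟨M, hM, HM⟩ := lintegral_kernel_bounded hγ0 hγ
  set N := ∫⁻ v in ball (0 : ℂ) 1, ENNReal.ofReal ((1 - ‖v‖) ^ (-β)) with hN
  have hNlt : N < ⊤ := lintegral_one_sub_norm hβ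
  refine ⟨ε, (M + N).toReal, hε0, hε1, ENNReal.toReal_nonneg, fun z hz => ?_⟩
  have hz' := hz
  rw [mem_ball_zero_iff] at hz'
  have hδ : 0 < 1 - ‖z‖ := by linarith
  rw [ENNReal.ofReal_mul ENNReal.toReal_nonneg,
    ENNReal.ofReal_toReal (ENNReal.add_lt_top.2 ⟨hM, hNlt⟩).ne, mul_comm]
  calc _ ≤ ∫⁻ v in ball (0 : ℂ) 1, ENNReal.ofReal ((1 - ‖z‖) ^ (ε - 1)) *
            (ENNReal.ofReal (‖1 - z * (starRingEnd ℂ) v‖ ^ (-γ)) +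
              ENNReal.ofReal ((1 - ‖v‖) ^ (-β))) := by
        refine setLIntegral_mono (by fun_prop) fun v hv => ?_
        rw [mem_ball_zero_iff] at hv
        have hB : 0 ≤ 1 - ‖v‖ := by linarith
        rw [← ENNReal.ofReal_add (by positivity) (by positivity),
          ← ENNReal.ofReal_mul (by positivity)]
        obtain ⟨h1, h2⟩ := one_sub_norm_le hz' hv
        exact ENNReal.ofReal_le_ofReal (H _ _ _ (by linarith) h2 hδ h1)
    _ = ENNReal.ofReal ((1 - ‖z‖) ^ (ε - 1)) *
          ((∫⁻ v in ball (0 : ℂ) 1, ENNReal.ofReal (‖1 - z * (starRingEnd ℂ) v‖ ^ (-γ))) + N) := by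
        rw [lintegral_const_mul' _ _ ENNReal.ofReal_ne_top, lintegral_add_right _ (by fun_prop)]
    _ ≤ _ := by gcongr; exact HM z hz

/-! ### From the Carleson measure to area measure -/

/-- The disks `B(v, c (1 - |v|))` with centres in a countable dense set cover the unit disk, so a
measure that is finite on them is σ-finite there. This is what makes Tonelli's theorem available
for the arbitrary Borel measure `μ`. -/
lemma sigmaFinite_restrict_ball {c : ℝ} (hc0 : 0 < c) (hc1 : c < 1) {μ : Measure ℂ}
    (hfin : ∀ v ∈ ball (0 : ℂ) 1, μ (ball v (c * (1 - ‖v‖))) < ⊤) :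
    SigmaFinite (μ.restrict (ball (0 : ℂ) 1)) := by
  refine ⟨⟨⟨fun n => ball (TopologicalSpace.denseSeq ℂ n)
    (c * (1 - ‖TopologicalSpace.denseSeq ℂ n‖)) ∪ (ball 0 1)ᶜ, fun _ => trivial, fun n => ?_, ?_⟩⟩⟩
  · refine (measure_union_le _ _).trans_lt (ENNReal.add_lt_top.2 ⟨?_, ?_⟩)
    · refine (Measure.restrict_apply_le _ _).trans_lt ?_
      by_cases h : ‖TopologicalSpace.denseSeq ℂ n‖ < 1
      · exact hfin _ (mem_ball_zero_iff.2 h)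
      · rw [ball_eq_empty.2 (by nlinarith)]; simp
    · rw [Measure.restrict_apply measurableSet_ball.compl]; simp
  · refine eq_univ_of_forall fun u => mem_iUnion.2 ?_
    by_cases hu : ‖u‖ < 1
    · obtain ⟨n, hn⟩ := (TopologicalSpace.denseRange_denseSeq ℂ).exists_dist_lt u
        (ε := c / 2 * (1 - ‖u‖)) (by nlinarith)
      refine ⟨n, Or.inl ?_⟩
      rw [mem_ball]
      rw [dist_eq_norm] at hn ⊢
      have := norm_sub_norm_le (TopologicalSpace.denseSeq ℂ n) u
      rw [norm_sub_rev] at this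
      have h2 : ‖u - TopologicalSpace.denseSeq ℂ n‖ < (1 - ‖u‖) / 2 := by nlinarith
      nlinarith
    · exact ⟨0, Or.inr (by simpa using hu)⟩

/-- Sub-mean-value property: the kernel at `u` is bounded by its average over the `v`
with `|u - v| < c (1 - |v|)`. That set contains `B(u, (c / 2) (1 - |u|))`, where `|1 - z v̄|` and
`1 - |v|` are at most twice their values at `u`. -/
lemma kernel_le_average {c s : ℝ} (hc0 : 0 < c) (hc1 : c < 1) (hs : 0 < s) :
    ∃ K : ℝ, 0 ≤ K ∧ ∀ z ∈ ball (0 : ℂ) 1, ∀ u ∈ ball (0 : ℂ) 1,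
      ENNReal.ofReal (‖1 - z * (starRingEnd ℂ) u‖ ^ (-s)) ≤ ENNReal.ofReal K *
        ∫⁻ v, {q : ℂ × ℂ | ‖q.1 - q.2‖ < c * (1 - ‖q.2‖)}.indicator
          (fun q => ENNReal.ofReal (‖1 - z * (starRingEnd ℂ) q.2‖ ^ (-s) * (1 - ‖q.2‖) ^ (-2 : ℝ)))
          (u, v) := by
  refine ⟨2 ^ s * 16 / (Real.pi * c ^ 2), by positivity, fun z hz u hu => ?_⟩
  rw [mem_ball_zero_iff] at hz hu
  set A := ‖1 - z * (starRingEnd ℂ) u‖ with hA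
  obtain ⟨hA1, hA2⟩ := one_sub_norm_le hz hu
  rw [← hA] at hA1 hA2
  have hδ : 0 < 1 - ‖u‖ := by linarith
  have hA0 : 0 < A := by linarith
  have hlow : (∫⁻ v in ball u (c / 2 * (1 - ‖u‖)),
      ENNReal.ofReal ((2 * A) ^ (-s) * (2 * (1 - ‖u‖)) ^ (-2 : ℝ))) ≤
      ∫⁻ v, {q : ℂ × ℂ | ‖q.1 - q.2‖ < c * (1 - ‖q.2‖)}.indicator
          (fun q => ENNReal.ofReal (‖1 - z * (starRingEnd ℂ) q.2‖ ^ (-s) * (1 - ‖q.2‖) ^ (-2 : ℝ)))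
          (u, v) := by
    rw [← lintegral_indicator measurableSet_ball]
    refine lintegral_mono fun v => ?_
    by_cases hv : v ∈ ball u (c / 2 * (1 - ‖u‖))
    swap
    · rw [indicator_of_notMem hv]; exact zero_le
    rw [indicator_of_mem hv]
    rw [mem_ball, dist_eq_norm] at hv
    have n1 := norm_sub_norm_le v u
    have n2 := norm_sub_norm_le u v
    rw [norm_sub_rev] at n2
    have hmem : (u, v) ∈ {q : ℂ × ℂ | ‖q.1 - q.2‖ < c * (1 - ‖q.2‖)} := by
      change ‖u - v‖ < c * (1 - ‖v‖)
      rw [norm_sub_rev]; nlinarith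
    rw [indicator_of_mem hmem]
    refine ENNReal.ofReal_le_ofReal ?_
    change _ ≤ ‖1 - z * (starRingEnd ℂ) v‖ ^ (-s) * (1 - ‖v‖) ^ (-2 : ℝ)
    have hv1 : ‖v‖ < 1 := by nlinarith
    have hAv := (one_sub_norm_le hz hv1).1
    have hAv2 : ‖1 - z * (starRingEnd ℂ) v‖ ≤ 2 * A := by
      have e : 1 - z * (starRingEnd ℂ) v =
          (1 - z * (starRingEnd ℂ) u) - z * (starRingEnd ℂ) (v - u) := by
        rw [map_sub]; ring
      have := norm_sub_le (1 - z * (starRingEnd ℂ) u) (z * (starRingEnd ℂ) (v - u))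
      rw [← e, ← hA, norm_mul, RCLike.norm_conj] at this
      nlinarith [norm_nonneg z, norm_nonneg (v - u)]
    exact mul_le_mul (Real.rpow_le_rpow_of_nonpos (by linarith) hAv2 (by linarith))
      (Real.rpow_le_rpow_of_nonpos (by linarith) (by nlinarith) (by norm_num))
      (Real.rpow_nonneg (by linarith) _) (Real.rpow_nonneg (norm_nonneg _) _)
  refine le_trans ?_ (mul_le_mul_right hlow _)
  rw [setLIntegral_const, Complex.volume_ball, ← ENNReal.ofReal_pow (by positivity),
    show ((NNReal.pi : ℝ≥0∞)) = ENNReal.ofReal Real.pi by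
      rw [← NNReal.coe_real_pi, ENNReal.ofReal_coe_nnreal],
    ← ENNReal.ofReal_mul (by positivity), ← ENNReal.ofReal_mul (by positivity),
    ← ENNReal.ofReal_mul (by positivity)]
  refine ENNReal.ofReal_le_ofReal (le_of_eq ?_)
  have hp := Real.pi_pos
  rw [Real.mul_rpow (by norm_num) hA0.le, Real.rpow_neg (by norm_num : (0:ℝ) ≤ 2) s,
    Real.rpow_neg (by positivity) 2, Real.rpow_two]
  have : (0:ℝ) < 2 ^ s := by positivity
  field_simp
  ring

/-- A Carleson measure of order `s` may be replaced by `(1 - |v|)^(s - 2) dA(v)` when integrating the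
kernel. -/
lemma lintegral_carleson_le {c s C : ℝ} (hc0 : 0 < c) (hc1 : c < 1) (hs : 0 < s) (hC : 0 ≤ C)
    {μ : Measure ℂ} (hμ : ∀ v ∈ ball (0 : ℂ) 1,
      μ (ball v (c * (1 - ‖v‖))) ≤ ENNReal.ofReal (C * (1 - ‖v‖) ^ s)) :
    ∃ K : ℝ, 0 ≤ K ∧ ∀ z ∈ ball (0 : ℂ) 1,
      ∫⁻ u in ball (0 : ℂ) 1, ENNReal.ofReal (‖1 - z * (starRingEnd ℂ) u‖ ^ (-s)) ∂μ ≤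
      ENNReal.ofReal K * ∫⁻ v in ball (0 : ℂ) 1,
        ENNReal.ofReal (‖1 - z * (starRingEnd ℂ) v‖ ^ (-s) * (1 - ‖v‖) ^ (s - 2)) := by
  have : SigmaFinite (μ.restrict (ball (0 : ℂ) 1)) :=
    sigmaFinite_restrict_ball hc0 hc1 fun v hv => (hμ v hv).trans_lt ENNReal.ofReal_lt_top
  obtain ⟨K, hK, H⟩ := kernel_le_average (s := s) hc0 hc1 hs
  refine ⟨K * C, by positivity, fun z hz => ?_⟩
  set S : Set (ℂ × ℂ) := {q | ‖q.1 - q.2‖ < c * (1 - ‖q.2‖)} with hS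
  set g : ℂ → ℝ≥0∞ := fun v =>
    ENNReal.ofReal (‖1 - z * (starRingEnd ℂ) v‖ ^ (-s) * (1 - ‖v‖) ^ (-2 : ℝ)) with hg
  have hSm : MeasurableSet S := (isOpen_lt (by fun_prop) (by fun_prop)).measurableSet
  have hcm : Measurable (fun v : ℂ => (starRingEnd ℂ) v) := Complex.continuous_conj.measurable
  have hgm : Measurable g := by fun_prop
  have hGm : Measurable (S.indicator (fun q : ℂ × ℂ => g q.2)) :=
    (hgm.comp measurable_snd).indicator hSm
  calc _ ≤ ∫⁻ u in ball (0 : ℂ) 1,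
            (ENNReal.ofReal K * ∫⁻ v, S.indicator (fun q : ℂ × ℂ => g q.2) (u, v)) ∂μ :=
        setLIntegral_mono (by
          exact Measurable.const_mul (Measurable.lintegral_prod_right' hGm) _)
          fun u hu => H z hz u hu
    _ = ENNReal.ofReal K * ∫⁻ v, ∫⁻ u in ball (0 : ℂ) 1,
            S.indicator (fun q : ℂ × ℂ => g q.2) (u, v) ∂μ := by
        rw [lintegral_const_mul' _ _ ENNReal.ofReal_ne_top,
          lintegral_lintegral_swap
            (f := fun u v => S.indicator (fun q : ℂ × ℂ => g q.2) (u, v)) hGm.aemeasurable]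
    _ ≤ ENNReal.ofReal K * ∫⁻ v, (ball (0 : ℂ) 1).indicator (fun v => ENNReal.ofReal C *
            ENNReal.ofReal (‖1 - z * (starRingEnd ℂ) v‖ ^ (-s) * (1 - ‖v‖) ^ (s - 2))) v := by
        gcongr with v
        -- For fixed `v` the section of `S` is the disk `B(v, c (1 - |v|))`, empty when `|v| ≥ 1`.
        have e : ∀ u, S.indicator (fun q : ℂ × ℂ => g q.2) (u, v) =
            (ball v (c * (1 - ‖v‖))).indicator (fun _ => g v) u := by
          intro u; simp [indicator, hS, dist_eq_norm]
        simp_rw [e]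
        refine (setLIntegral_le_lintegral _ _).trans ?_
        rw [lintegral_indicator measurableSet_ball, setLIntegral_const]
        by_cases hv : v ∈ ball (0 : ℂ) 1
        · rw [indicator_of_mem hv]
          refine (mul_le_mul_right (hμ v hv) _).trans (le_of_eq ?_)
          rw [mem_ball_zero_iff] at hv
          have hδ : 0 < 1 - ‖v‖ := by linarith
          rw [hg, ← ENNReal.ofReal_mul (by positivity), ← ENNReal.ofReal_mul hC,
            show s - 2 = -2 + s by ring, Real.rpow_add hδ]
          congr 1; ring
        · rw [mem_ball_zero_iff, not_lt] at hv
          rw [ball_eq_empty.2 (by nlinarith)]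
          simp
    _ = _ := by
        rw [lintegral_indicator measurableSet_ball,
          lintegral_const_mul' _ _ ENNReal.ofReal_ne_top, ENNReal.ofReal_mul hK, mul_assoc]

/-! ### Euclidean and pseudohyperbolic disks, and the logarithmic bound -/

lemma euclidean_ball_subset_pD {r : ℝ} (hr : r < 1) {v : ℂ} (hv : ‖v‖ < 1) :
    ball v (r * (1 - ‖v‖)) ⊆ pD v r := by
  intro w hw
  rw [mem_ball, dist_eq_norm, norm_sub_rev] at hw
  have n1 := norm_sub_norm_le w v
  rw [norm_sub_rev] at n1
  have hw1 : ‖w‖ < 1 := by nlinarith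
  refine ⟨mem_ball_zero_iff.2 hw1, ?_⟩
  have h := norm_sub_norm_le (1 : ℂ) ((starRingEnd ℂ) v * w)
  rw [norm_mul, RCLike.norm_conj, norm_one] at h
  have h1 : 1 - ‖v‖ ≤ ‖1 - (starRingEnd ℂ) v * w‖ := by nlinarith [norm_nonneg v]
  have hr0 : 0 < r := by
    by_contra! hr0
    nlinarith [norm_nonneg (v - w)]
  rw [norm_div, div_lt_iff₀ (by linarith)]
  nlinarith

theorem stmt11 (p a : ℝ) (hp0 : 0 < p) (hp1 : p ≤ 1) (ha : -1 < a)
    (μ : Measure ℂ)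
    (hμ : ∃ r ∈ Set.Ioo (0 : ℝ) 1, ∃ C : ℝ, ∀ z ∈ ball (0 : ℂ) 1,
      μ (pD z r) ≤ ENNReal.ofReal (C * (1 - ‖z‖ ^ 2) ^ ((a + 2) / p))) :
    ∃ C : ℝ, ∀ z ∈ ball (0 : ℂ) 1,
      (1 - ‖z‖ ^ 2) * Real.log (2 / (1 - ‖z‖ ^ 2)) *
        ‖Toep μ ((2 + a - p) / p - 1) (fun _ => 1) z‖ ≤ C := by
  obtain ⟨r, ⟨hr0, hr1⟩, C, hC⟩ := hμ
  obtain ⟨s, hs⟩ : ∃ s : ℝ, s = (a + 2) / p := ⟨_, rfl⟩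
  have hs1 : 1 < s := by rw [hs, lt_div_iff₀ hp0]; linarith
  have hexp : 2 + ((2 + a - p) / p - 1) = s := by rw [hs]; field_simp; ring
  rw [← hs] at hC
  have hball : ∀ v ∈ ball (0 : ℂ) 1,
      μ (ball v (r * (1 - ‖v‖))) ≤ ENNReal.ofReal (|C| * 2 ^ s * (1 - ‖v‖) ^ s) := by
    intro v hv
    have hv1 := mem_ball_zero_iff.1 hv
    refine (measure_mono (euclidean_ball_subset_pD hr1 hv1)).trans ((hC v hv).trans ?_)
    refine ENNReal.ofReal_le_ofReal ?_
    have h0 : 0 ≤ 1 - ‖v‖ ^ 2 := by nlinarith [norm_nonneg v]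
    rw [mul_assoc, ← Real.mul_rpow (by norm_num) (by linarith)]
    refine mul_le_mul (le_abs_self C) (Real.rpow_le_rpow h0 ?_ (by linarith))
      (by positivity) (abs_nonneg C)
    nlinarith [norm_nonneg v]
  obtain ⟨K₁, hK₁, H₁⟩ := lintegral_carleson_le hr0 hr1 (by linarith) (by positivity) hball
  obtain ⟨ε, K₂, hε0, hε1, hK₂, H₂⟩ := lintegral_area_bound hs1
  refine ⟨2 / ε * (K₁ * K₂), fun z hz => ?_⟩
  have hz1 := mem_ball_zero_iff.1 hz
  have hδ : 0 < 1 - ‖z‖ := by linarith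
  have hT : ‖Toep μ ((2 + a - p) / p - 1) (fun _ => 1) z‖ ≤
      K₁ * K₂ * (1 - ‖z‖) ^ (ε - 1) := by
    rw [← ENNReal.ofReal_le_ofReal_iff (by positivity), ofReal_norm, Toep, hexp]
    calc _ ≤ _ := enorm_integral_le_lintegral_enorm _
      _ = ∫⁻ u in ball (0 : ℂ) 1,
            ENNReal.ofReal (‖1 - z * (starRingEnd ℂ) u‖ ^ (-s)) ∂μ := by
          congr 1; ext u
          rw [← ofReal_norm, norm_div, norm_one, Complex.norm_cpow_real,
            Real.rpow_neg (norm_nonneg _), one_div]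
      _ ≤ _ := H₁ z hz
      _ ≤ ENNReal.ofReal K₁ * ENNReal.ofReal (K₂ * (1 - ‖z‖) ^ (ε - 1)) := by
          gcongr; exact H₂ z hz
      _ = _ := by rw [← ENNReal.ofReal_mul hK₁, mul_assoc]
  obtain ⟨x, hx⟩ : ∃ x : ℝ, x = 1 - ‖z‖ ^ 2 := ⟨_, rfl⟩
  rw [← hx]
  have hxδ : 1 - ‖z‖ ≤ x := by nlinarith [norm_nonneg z]
  have hx2 : x ≤ 2 * (1 - ‖z‖) := by nlinarith [norm_nonneg z]
  have hx0 : 0 < x := by linarith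
  have hlog : Real.log (2 / x) ≤ (2 / x) ^ ε / ε := Real.log_le_rpow_div (by positivity) hε0
  have hmain : x * (2 / x) ^ ε * (1 - ‖z‖) ^ (ε - 1) ≤ 2 := by
    have e1 : x * (2 / x) ^ ε = x ^ (1 - ε) * 2 ^ ε := by
      rw [Real.div_rpow (by norm_num) hx0.le, Real.rpow_sub hx0, Real.rpow_one]; ring
    have e2 : x ^ (1 - ε) ≤ 2 ^ (1 - ε) * (1 - ‖z‖) ^ (1 - ε) := by
      rw [← Real.mul_rpow (by norm_num) hδ.le]
      exact Real.rpow_le_rpow hx0.le hx2 (by linarith)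
    calc x * (2 / x) ^ ε * (1 - ‖z‖) ^ (ε - 1)
        ≤ (2 ^ (1 - ε) * (1 - ‖z‖) ^ (1 - ε)) * 2 ^ ε * (1 - ‖z‖) ^ (ε - 1) := by
          rw [e1]; gcongr
      _ = ((2 : ℝ) ^ (1 - ε) * 2 ^ ε) * ((1 - ‖z‖) ^ (1 - ε) * (1 - ‖z‖) ^ (ε - 1)) := by ring
      _ = 2 := by
          rw [← Real.rpow_add (by norm_num), ← Real.rpow_add hδ]; simp
  calc x * Real.log (2 / x) * ‖Toep μ ((2 + a - p) / p - 1) (fun _ => 1) z‖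
      ≤ x * ((2 / x) ^ ε / ε) * (K₁ * K₂ * (1 - ‖z‖) ^ (ε - 1)) := by gcongr
    _ = (x * (2 / x) ^ ε * (1 - ‖z‖) ^ (ε - 1)) / ε * (K₁ * K₂) := by ring
    _ ≤ 2 / ε * (K₁ * K₂) := by gcongr
end
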